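/- Let Ω ⊂ ℝ² be a bounded, open, connected set with Lipschitz boundary and let u ∈ W^{1,1}(Ω;S¹). Then for every open set U ⊆ Ω one has 𝒜**(u,U) = ∫_U √(1 + |∇u|²) dx, where |∇u| is the Frobenius norm of the weak gradient of u. -/

import Mathlib

open MeasureTheory Metric Filter Set
open scoped ENNReal NNReal Topology Classical

noncomputable section

abbrev R2 := EuclideanSpace ℝ (Fin 2)

/-- `Ω ⊂ ℝ²` has Lipschitz boundary: near every boundary point, after a rigid motion,
`Ω` coincides with the open region strictly above the graph of a Lipschitz function. -/
def HasLipschitzBoundary (Ω : Set R2) : Prop :=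
  ∀ p ∈ frontier Ω, ∃ r : ℝ, 0 < r ∧ ∃ (f : R2 ≃ᵢ R2) (γ : ℝ → ℝ) (L : ℝ≥0),
    LipschitzWith L γ ∧ ∀ x ∈ Metric.ball p r, (x ∈ Ω ↔ γ (f x 0) < f x 1)

/-- `G` is the weak (distributional) gradient of `u` on `Ω`:
`∫_Ω u_i ∂_j φ = -∫_Ω G_{ij} φ` for all test functions `φ ∈ C_c^∞(Ω)`. -/
def IsWeakGradient (Ω : Set R2) (u : R2 → R2) (G : R2 → Matrix (Fin 2) (Fin 2) ℝ) : Prop :=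
  ∀ φ : R2 → ℝ, ContDiff ℝ (⊤ : ℕ∞) φ → HasCompactSupport φ → tsupport φ ⊆ Ω →
    ∀ i j : Fin 2,
      (∫ x in Ω, u x i * fderiv ℝ φ x (EuclideanSpace.single j 1)) =
        - ∫ x in Ω, G x i j * φ x

/-- `u ∈ W^{1,1}(Ω;ℝ²)` with weak gradient `G`. -/
def MemW11 (Ω : Set R2) (u : R2 → R2) (G : R2 → Matrix (Fin 2) (Fin 2) ℝ) : Prop :=
  IntegrableOn u Ω ∧ (∀ i j : Fin 2, IntegrableOn (fun x => G x i j) Ω) ∧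
    IsWeakGradient Ω u G

/-- `|u| = 1` a.e. in `Ω`. -/
def SphereValued (Ω : Set R2) (u : R2 → R2) : Prop :=
  ∀ᵐ x ∂(volume.restrict Ω), ‖u x‖ = 1

/-- Frobenius norm of a `2×2` matrix. -/
def frob (M : Matrix (Fin 2) (Fin 2) ℝ) : ℝ :=
  Real.sqrt (∑ i, ∑ j, (M i j) ^ 2)

/-- Jacobian matrix of a map `v : ℝ² → ℝ²`. -/
def jacobianMatrix (v : R2 → R2) (x : R2) : Matrix (Fin 2) (Fin 2) ℝ :=
  Matrix.of fun i j => fderiv ℝ v x (EuclideanSpace.single j 1) i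

/-- Classical graph area `A(v,A) = ∫_A √(1 + |∇v|² + (Jv)²)` of a `C¹` map. -/
def classicalArea (A : Set R2) (v : R2 → R2) : ℝ≥0∞ :=
  ∫⁻ x in A, ENNReal.ofReal
    (Real.sqrt (1 + (∑ i, ∑ j, (jacobianMatrix v x i j) ^ 2) + (jacobianMatrix v x).det ^ 2))

/-- `L¹`-relaxed area functional `𝒜(u,A)`. -/
def relaxedArea (u : R2 → R2) (A : Set R2) : ℝ≥0∞ :=
  sInf { a : ℝ≥0∞ | ∃ v : ℕ → R2 → R2,
    (∀ k, ContDiffOn ℝ 1 (v k) A) ∧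
    (∀ k, IntegrableOn (fun x => v k x - u x) A) ∧
    Tendsto (fun k => ∫ x in A, ‖v k x - u x‖) atTop (nhds 0) ∧
    a = Filter.liminf (fun k => classicalArea A (v k)) atTop }

/-- `λ_u = (1/2)(u₁ ∇^⊥u₂ − u₂ ∇^⊥u₁)`, computed from the weak gradient `G`. -/
def lambdaVec (u : R2 → R2) (G : R2 → Matrix (Fin 2) (Fin 2) ℝ) (x : R2) : Fin 2 → ℝ :=
  ![ (1 / 2) * (-(u x 0) * G x 1 1 + u x 1 * G x 0 1),
     (1 / 2) * (u x 0 * G x 1 0 - u x 1 * G x 0 0) ]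

/-- Distributional Jacobian pairing `⟨Det(∇u), φ⟩ = ∫_Ω λ_u · ∇φ`. -/
def detPairing (Ω : Set R2) (u : R2 → R2) (G : R2 → Matrix (Fin 2) (Fin 2) ℝ)
    (φ : R2 → ℝ) : ℝ :=
  ∫ x in Ω, ∑ j, lambdaVec u G x j * fderiv ℝ φ x (EuclideanSpace.single j 1)

/-- `φ ∈ Lip₀(Ω)`: Lipschitz on `cl(Ω)` and vanishing on `∂Ω`. -/
def MemLip0 (Ω : Set R2) (φ : R2 → ℝ) : Prop :=
  (∃ L : ℝ≥0, LipschitzOnWith L φ (closure Ω)) ∧ ∀ p ∈ frontier Ω, φ p = 0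

/-- Admissible test functions for the flat norm: Lipschitz constant `≤ L` on `cl(Ω)`,
vanishing on `Z`, and bounded by `1` on `cl(Ω)`. -/
def FlatAdmissible (Ω Z : Set R2) (L : ℝ≥0) (φ : R2 → ℝ) : Prop :=
  LipschitzOnWith L φ (closure Ω) ∧ (∀ p ∈ Z, φ p = 0) ∧ ∀ p ∈ closure Ω, |φ p| ≤ 1

/-- Flat norm of a functional `F`, with vanishing condition on the set `Z`. -/
def flatNormOn (Ω Z : Set R2) (L : ℝ≥0) (F : (R2 → ℝ) → ℝ) : ℝ≥0∞ :=
  ⨆ φ ∈ {φ : R2 → ℝ | FlatAdmissible Ω Z L φ}, ENNReal.ofReal (F φ)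

/-- Flat norm of a functional `F` on `Lip₀(Ω)`; `L = 2` gives `‖·‖_{flat,α}` (α = 1/2),
`L = 1` gives `‖·‖_flat`. -/
def flatNorm (Ω : Set R2) (L : ℝ≥0) (F : (R2 → ℝ) → ℝ) : ℝ≥0∞ :=
  flatNormOn Ω (frontier Ω) L F

/-- `d̄_Ω(x,y) = min{|x−y|, dist(x,∂Ω) + dist(y,∂Ω)}`. -/
def dbar (Ω : Set R2) (x y : R2) : ℝ :=
  min (dist x y) (Metric.infDist x (frontier Ω) + Metric.infDist y (frontier Ω))

/-- Countably subadditive interior envelope `𝒜**(u,V)` (relative to `Ω`). -/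
def envA (u : R2 → R2) (Ω V : Set R2) : ℝ≥0∞ :=
  sInf { a : ℝ≥0∞ | ∃ A : ℕ → Set R2,
    (∀ k, IsOpen (A k) ∧ A k ⊆ Ω) ∧ V ⊆ ⋃ k, A k ∧ a = ∑' k, relaxedArea u (A k) }

/-- Property `(P_f)` for a finite family of pairs of points of `cl(Ω)`. -/
def SatisfiesPf (Ω : Set R2) {n : ℕ} (x y : Fin n → R2) : Prop :=
  (∀ k, (x k ∈ Ω ∧ y k ∈ frontier Ω ∧ dist (x k) (y k) = Metric.infDist (x k) (frontier Ω)) ∨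
        (y k ∈ Ω ∧ x k ∈ frontier Ω ∧ dist (x k) (y k) = Metric.infDist (y k) (frontier Ω))) ∧
  ∀ i j, x i ∈ Ω → y j ∈ Ω → x i ≠ y j

/-- The points of the family `x, y` lying in `Ω` are distinct and three by three
not collinear. -/
def InteriorPointsGeneric (Ω : Set R2) {n : ℕ} (x y : Fin n → R2) : Prop :=
  (∀ a b : Fin n ⊕ Fin n, Sum.elim x y a ∈ Ω → Sum.elim x y b ∈ Ω → a ≠ b →
    Sum.elim x y a ≠ Sum.elim x y b) ∧
  ∀ a b c : Fin n ⊕ Fin n, Sum.elim x y a ∈ Ω → Sum.elim x y b ∈ Ω → Sum.elim x y c ∈ Ω →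
    a ≠ b → a ≠ c → b ≠ c →
    ¬ Collinear ℝ ({Sum.elim x y a, Sum.elim x y b, Sum.elim x y c} : Set R2)

/-- `ι(w₁,w₂) = (w₁,−w₂)`. -/
def conjPt (w : R2) : R2 := (WithLp.equiv 2 (Fin 2 → ℝ)).symm ![w 0, -(w 1)]

/-- `u` is a (positive/negative) vortex around the points of the family lying in `Ω`:
the closed discs of radii `ρ` are contained in `Ω` and pairwise disjoint,
`u(z) = (z−x_i)/|z−x_i|` on `B_{ρ}(x_i)` and `u(z) = ι((z−y_j)/|z−y_j|)` on `B_{ρ}(y_j)`. -/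
def VortexAt (Ω : Set R2) (u : R2 → R2) {n : ℕ} (x y : Fin n → R2)
    (ρ : Fin n ⊕ Fin n → ℝ) : Prop :=
  (∀ a, Sum.elim x y a ∈ Ω → Metric.closedBall (Sum.elim x y a) (ρ a) ⊆ Ω) ∧
  (∀ a b, a ≠ b → Sum.elim x y a ∈ Ω → Sum.elim x y b ∈ Ω →
    Disjoint (Metric.closedBall (Sum.elim x y a) (ρ a))
      (Metric.closedBall (Sum.elim x y b) (ρ b))) ∧
  (∀ i, x i ∈ Ω → ∀ᵐ z ∂(volume.restrict (Metric.ball (x i) (ρ (Sum.inl i)))),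
    u z = ‖z - x i‖⁻¹ • (z - x i)) ∧
  (∀ i, y i ∈ Ω → ∀ᵐ z ∂(volume.restrict (Metric.ball (y i) (ρ (Sum.inr i)))),
    u z = conjPt (‖z - y i‖⁻¹ • (z - y i)))

/-- The energy `E(I_P, I_D, τ)` of a partition `{I_Dᶜ, I_D}` of `I` and an injection
`τ : I_D → I`. -/
def energy (Ω : Set R2) {n : ℕ} (x y : Fin n → R2) (ID : Finset (Fin n))
    (τ : Fin n → Fin n) : ℝ≥0∞ :=
  ((IDᶜ.filter fun k => x k ∈ Ω).card : ℝ≥0∞) +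
  (((Finset.univ \ ID.image τ).filter fun j => y j ∈ Ω).card : ℝ≥0∞) +
  2 * ∑ k ∈ ID, μH[1] (segment ℝ (y (τ k)) (x k) ∩ Ω)


/-- Mollification kernels. -/
def rhoB (k : ℕ) : ContDiffBump (0 : R2) :=
  ⟨1 / (2 * ((k : ℝ) + 1)), 1 / ((k : ℝ) + 1), by positivity, by
    apply one_div_lt_one_div_of_lt
    · positivity
    · have : (0 : ℝ) ≤ k := by positivity
      linarith⟩

def kern (k : ℕ) : R2 → ℝ := (rhoB k).normed volume

lemma kern_nonneg (k : ℕ) (x : R2) : 0 ≤ kern k x := (rhoB k).nonneg_normed x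

lemma kern_contDiff (k : ℕ) : ContDiff ℝ (⊤ : ℕ∞) (kern k) := (rhoB k).contDiff_normed

lemma kern_cont (k : ℕ) : Continuous (kern k) := (kern_contDiff k).continuous

lemma kern_compact (k : ℕ) : HasCompactSupport (kern k) := (rhoB k).hasCompactSupport_normed

lemma kern_tsupport (k : ℕ) : tsupport (kern k) = closedBall 0 (1 / ((k : ℝ) + 1)) :=
  (rhoB k).tsupport_normed_eq

lemma kern_integrable (k : ℕ) : Integrable (kern k) := (rhoB k).integrable_normed

lemma kern_integral (k : ℕ) : ∫ x, kern k x = 1 := (rhoB k).integral_normed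

def mol (A : Set R2) (k : ℕ) (f : R2 → ℝ) (x : R2) : ℝ := ∫ t in A, f t * kern k (x - t)

lemma mol_eq_conv (A : Set R2) (k : ℕ) (f : R2 → ℝ) :
    mol A k f = (convolution f (kern k) (ContinuousLinearMap.mul ℝ ℝ) (volume.restrict A)) := by
  ext x
  simp [mol, convolution]

lemma mol_contDiff (A : Set R2) (k : ℕ) (f : R2 → ℝ) (hf : IntegrableOn f A) :
    ContDiff ℝ 1 (mol A k f) := by
  rw [mol_eq_conv]
  have h := (kern_compact k).contDiff_convolution_right (n := 1) (μ := volume.restrict A)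
    (ContinuousLinearMap.mul ℝ ℝ) (Integrable.locallyIntegrable hf)
    ((kern_contDiff k).of_le (by exact_mod_cast le_top))
  exact h

lemma mol_eq_conv2 (A : Set R2) (hA : MeasurableSet A) (k : ℕ) (f : R2 → ℝ) :
    mol A k f = (convolution (A.indicator f) (kern k) (ContinuousLinearMap.mul ℝ ℝ) volume) := by
  ext x
  rw [mol, ← integral_indicator hA, convolution]
  congr 1
  ext t
  by_cases ht : t ∈ A <;> simp [ht]

lemma mol_fderiv (A : Set R2) (hA : MeasurableSet A) (k : ℕ) (f : R2 → ℝ)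
    (hf : IntegrableOn f A) (x e : R2) :
    fderiv ℝ (mol A k f) x e = ∫ t in A, f t * fderiv ℝ (kern k) (x - t) e := by
  have hI : Integrable (A.indicator f) := (integrable_indicator_iff hA).2 hf
  have h := (kern_compact k).hasFDerivAt_convolution_right (μ := volume)
    (ContinuousLinearMap.mul ℝ ℝ) hI.locallyIntegrable
    ((kern_contDiff k).of_le (by exact_mod_cast le_top)) x
  rw [mol_eq_conv2 A hA, h.fderiv]
  rw [convolution_precompR_apply (ContinuousLinearMap.mul ℝ ℝ) hI.locallyIntegrable
    ((kern_compact k).fderiv ℝ) ((kern_contDiff k).continuous_fderiv (by simp))]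
  rw [← integral_indicator hA, convolution]
  congr 1
  ext t
  by_cases ht : t ∈ A <;> simp [ht]

lemma mol_weak (A : Set R2) (hA : MeasurableSet A) (k : ℕ) (u : R2 → R2) (G : R2 → Matrix (Fin 2) (Fin 2) ℝ)
    (h : MemW11 A u G) (x : R2) (hx : closedBall x (1 / ((k : ℝ) + 1)) ⊆ A) (i j : Fin 2) :
    fderiv ℝ (mol A k (fun y => u y i)) x (EuclideanSpace.single j 1)
      = mol A k (fun y => G y i j) x := by
  obtain ⟨h1, h2, h3⟩ := h
  have hu : IntegrableOn (fun y => u y i) A :=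
    (EuclideanSpace.proj (𝕜 := ℝ) i).integrable_comp h1
  rw [mol_fderiv A hA k _ hu]
  have hts : tsupport (fun t => kern k (x - t)) = closedBall x (1 / ((k : ℝ) + 1)) := by
    have := tsupport_comp_eq_preimage (kern k) (Homeomorph.subLeft x)
    rw [kern_tsupport] at this
    have h4 : (fun t => kern k (x - t)) = kern k ∘ (Homeomorph.subLeft x) := by
      ext t; simp
    rw [h4, this]
    ext t
    simp [dist_eq_norm, norm_sub_rev]
  have := h3 (fun t => kern k (x - t)) ((kern_contDiff k).comp (contDiff_const.sub contDiff_id))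
    (by rw [HasCompactSupport, hts]; exact isCompact_closedBall _ _) (by rw [hts]; exact hx) i j
  rw [mol, ← neg_inj, ← this, ← integral_neg]
  congr 1
  ext t
  have h5 : HasFDerivAt (fun t => kern k (x - t))
      ((fderiv ℝ (kern k) (x - t)).comp (-ContinuousLinearMap.id ℝ R2)) t := by
    have h6 : HasFDerivAt (kern k) (fderiv ℝ (kern k) (x - t)) (x - t) :=
      ((kern_contDiff k).differentiable (by simp)).differentiableAt.hasFDerivAt
    have h7 : HasFDerivAt (fun t : R2 => x - t) (-ContinuousLinearMap.id ℝ R2) t :=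
      (hasFDerivAt_id t).const_sub x
    exact h6.comp t h7
  rw [h5.fderiv]
  simp

lemma mol_ae (A : Set R2) (hA : MeasurableSet A) (f : R2 → ℝ) (hf : IntegrableOn f A) :
    ∀ᵐ x ∂(volume.restrict A), Tendsto (fun k => mol A k f x) atTop (𝓝 (f x)) := by
  have hK : ∀ k : ℕ, (rhoB k).rOut ≤ 2 * (rhoB k).rIn := by
    intro k
    show 1 / ((k : ℝ) + 1) ≤ 2 * (1 / (2 * ((k : ℝ) + 1)))
    field_simp
    exact le_refl _
  have hI : Integrable (A.indicator f) := (integrable_indicator_iff hA).2 hf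
  have h := ContDiffBump.ae_convolution_tendsto_right_of_locallyIntegrable (μ := volume)
    (φ := rhoB) (l := atTop) (K := 2) (g := A.indicator f) tendsto_one_div_add_atTop_nhds_zero_nat
    (Eventually.of_forall hK) hI.locallyIntegrable
  filter_upwards [ae_restrict_of_ae h, ae_restrict_mem hA] with x hx hxA
  rw [indicator_of_mem hxA] at hx
  refine hx.congr ?_
  intro k
  rw [convolution_eq_swap, mol, ← integral_indicator hA]
  congr 1
  ext t
  by_cases ht : t ∈ A <;> simp [ht, kern, mul_comm]



abbrev M2 := Matrix (Fin 2) (Fin 2) ℝ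

def gs (M : M2) : ℝ := Real.sqrt (1 + ∑ i, ∑ j, (M i j) ^ 2)

lemma gs_cont : Continuous gs := by
  unfold gs
  fun_prop

lemma gs_ge_one (M : M2) : 1 ≤ gs M := by
  unfold gs
  rw [Real.one_le_sqrt]
  have : 0 ≤ ∑ i, ∑ j, (M i j) ^ 2 :=
    Finset.sum_nonneg fun i _ => Finset.sum_nonneg fun j _ => sq_nonneg _
  linarith

lemma gs_sq (M : M2) : gs M ^ 2 = 1 + ∑ i, ∑ j, (M i j) ^ 2 := by
  unfold gs
  rw [Real.sq_sqrt]
  have : 0 ≤ ∑ i, ∑ j, (M i j) ^ 2 :=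
    Finset.sum_nonneg fun i _ => Finset.sum_nonneg fun j _ => sq_nonneg _
  linarith

lemma gs_nonneg (M : M2) : 0 ≤ gs M := Real.sqrt_nonneg _

lemma gs_le (M : M2) : gs M ≤ 1 + ∑ i, ∑ j, |M i j| := by
  have hn : 0 ≤ ∑ i, ∑ j, |M i j| :=
    Finset.sum_nonneg fun i _ => Finset.sum_nonneg fun j _ => abs_nonneg _
  unfold gs
  rw [Real.sqrt_le_left (by linarith)]
  simp only [Fin.sum_univ_two]
  have := abs_nonneg (M 0 0)
  have := abs_nonneg (M 0 1)
  have := abs_nonneg (M 1 0)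
  have := abs_nonneg (M 1 1)
  rw [← sq_abs (M 0 0), ← sq_abs (M 0 1), ← sq_abs (M 1 0), ← sq_abs (M 1 1)]
  generalize |M 0 0| = a at *
  generalize |M 0 1| = b at *
  generalize |M 1 0| = c at *
  generalize |M 1 1| = d at *
  nlinarith [mul_nonneg ‹0 ≤ a› ‹0 ≤ b›, mul_nonneg ‹0 ≤ a› ‹0 ≤ c›, mul_nonneg ‹0 ≤ a› ‹0 ≤ d›,
    mul_nonneg ‹0 ≤ b› ‹0 ≤ c›, mul_nonneg ‹0 ≤ b› ‹0 ≤ d›, mul_nonneg ‹0 ≤ c› ‹0 ≤ d›]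

lemma abs_le_gs (M : M2) (i j : Fin 2) : |M i j| ≤ gs M := by
  unfold gs
  apply Real.abs_le_sqrt
  fin_cases i <;> fin_cases j <;> simp [Fin.sum_univ_two] <;>
    nlinarith [sq_nonneg (M 0 0), sq_nonneg (M 0 1), sq_nonneg (M 1 0), sq_nonneg (M 1 1)]

lemma gs_cs (M N : M2) : 1 + ∑ i, ∑ j, M i j * N i j ≤ gs M * gs N := by
  refine le_of_sq_le_sq ?_ ?_
  · rw [mul_pow, gs_sq, gs_sq]
    simp only [Fin.sum_univ_two]
    nlinarith [sq_nonneg (M 0 0 - N 0 0), sq_nonneg (M 0 1 - N 0 1), sq_nonneg (M 1 0 - N 1 0),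
      sq_nonneg (M 1 1 - N 1 1),
      sq_nonneg (M 0 0 * N 0 1 - M 0 1 * N 0 0), sq_nonneg (M 0 0 * N 1 0 - M 1 0 * N 0 0),
      sq_nonneg (M 0 0 * N 1 1 - M 1 1 * N 0 0), sq_nonneg (M 0 1 * N 1 0 - M 1 0 * N 0 1),
      sq_nonneg (M 0 1 * N 1 1 - M 1 1 * N 0 1), sq_nonneg (M 1 0 * N 1 1 - M 1 1 * N 1 0)]
  · exact mul_nonneg (gs_nonneg _) (gs_nonneg _)

lemma gs_aemeas (μ : Measure R2) (H : R2 → M2)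
    (h : ∀ i j, AEStronglyMeasurable (fun x => H x i j) μ) :
    AEStronglyMeasurable (fun x => gs (H x)) μ := by
  unfold gs
  apply Real.continuous_sqrt.comp_aestronglyMeasurable
  apply AEStronglyMeasurable.add aestronglyMeasurable_const
  simp only [Fin.sum_univ_two]
  exact (((h 0 0).pow 2).add ((h 0 1).pow 2)).add (((h 1 0).pow 2).add ((h 1 1).pow 2))

lemma gs_integrable (A : Set R2) (hA : volume A ≠ ∞) (H : R2 → M2)
    (h : ∀ i j, IntegrableOn (fun x => H x i j) A) : IntegrableOn (fun x => gs (H x)) A := by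
  have h1 : IntegrableOn (fun x => 1 + ∑ i, ∑ j, |H x i j|) A := by
    apply Integrable.add
    · exact integrableOn_const hA
    · exact integrable_finsetSum _ fun i _ => integrable_finsetSum _ fun j _ => (h i j).abs
  refine Integrable.mono' h1 (gs_aemeas _ H fun i j => (h i j).1) ?_
  refine Eventually.of_forall fun x => ?_
  rw [Real.norm_of_nonneg (gs_nonneg _)]
  exact gs_le _



lemma kern_bdd (k : ℕ) : ∃ C, ∀ x, ‖kern k x‖ ≤ C :=
  (kern_compact k).exists_bound_of_continuous (kern_cont k)

lemma mul_kern_integrable (A : Set R2) (k : ℕ) (f : R2 → ℝ) (hf : IntegrableOn f A) (x : R2) :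
    IntegrableOn (fun t => f t * kern k (x - t)) A := by
  obtain ⟨C, hC⟩ := kern_bdd k
  exact Integrable.mul_bdd (c := C) hf
    ((kern_cont k).comp (continuous_const.sub continuous_id)).aestronglyMeasurable
    (Eventually.of_forall fun t => hC _)

lemma kern_sub_integral (A : Set R2) (k : ℕ) (x : R2)
    (hx : closedBall x (1 / ((k : ℝ) + 1)) ⊆ A) : ∫ t in A, kern k (x - t) = 1 := by
  rw [setIntegral_eq_integral_of_forall_compl_eq_zero, integral_sub_left_eq_self, kern_integral]
  intro t ht
  have h1 : x - t ∉ tsupport (kern k) := by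
    rw [kern_tsupport]
    intro h
    apply ht
    apply hx
    simpa [dist_eq_norm, norm_sub_rev] using h
  exact image_eq_zero_of_notMem_tsupport h1

def molMat (A : Set R2) (k : ℕ) (H : R2 → M2) (x : R2) : M2 :=
  Matrix.of fun i j => mol A k (fun y => H y i j) x

lemma jensen_pt (A : Set R2) (hA : volume A ≠ ∞) (k : ℕ) (H : R2 → M2)
    (h : ∀ i j, IntegrableOn (fun x => H x i j) A) (x : R2)
    (hx : closedBall x (1 / ((k : ℝ) + 1)) ⊆ A) :
    gs (molMat A k H x) ≤ ∫ t in A, gs (H t) * kern k (x - t) := by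
  set m := molMat A k H x with hm
  have h1 : gs m * gs m = ∫ t in A, (1 + ∑ i, ∑ j, m i j * H t i j) * kern k (x - t) := by
    have e : ∀ t, (1 + ∑ i, ∑ j, m i j * H t i j) * kern k (x - t)
        = kern k (x - t) + ∑ i, ∑ j, m i j * (H t i j * kern k (x - t)) := by
      intro t
      simp only [Fin.sum_univ_two]
      ring
    simp_rw [e]
    have hi : IntegrableOn (fun t => kern k (x - t)) A :=
      ((kern_integrable k).comp_sub_left x).integrableOn
    rw [integral_add hi, integral_finsetSum, kern_sub_integral A k x hx, ← sq, gs_sq]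
    · congr 1
      refine Finset.sum_congr rfl fun i _ => ?_
      rw [integral_finsetSum]
      · refine Finset.sum_congr rfl fun j _ => ?_
        rw [integral_const_mul, sq]
        rfl
      · exact fun j _ => (mul_kern_integrable A k _ (h i j) x).const_mul _
    · exact fun i _ => integrable_finsetSum _ fun j _ =>
        (mul_kern_integrable A k _ (h i j) x).const_mul _
    · exact integrable_finsetSum _ fun i _ => integrable_finsetSum _ fun j _ =>
        (mul_kern_integrable A k _ (h i j) x).const_mul _
  have h2 : gs m * gs m ≤ gs m * ∫ t in A, gs (H t) * kern k (x - t) := by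
    rw [h1, ← integral_const_mul]
    apply integral_mono_ae
    · have e : ∀ t, (1 + ∑ i, ∑ j, m i j * H t i j) * kern k (x - t)
          = kern k (x - t) + ∑ i, ∑ j, m i j * (H t i j * kern k (x - t)) := by
        intro t
        simp only [Fin.sum_univ_two]
        ring
      simp_rw [e]
      have hi : IntegrableOn (fun t => kern k (x - t)) A :=
        ((kern_integrable k).comp_sub_left x).integrableOn
      exact hi.add (integrable_finsetSum _ fun i _ => integrable_finsetSum _ fun j _ =>
        (mul_kern_integrable A k _ (h i j) x).const_mul _)
    · exact (mul_kern_integrable A k _ (gs_integrable A hA H h) x).const_mul _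
    · refine Eventually.of_forall fun t => ?_
      have := mul_le_mul_of_nonneg_right (gs_cs m (H t)) (kern_nonneg k (x - t))
      simpa [mul_assoc] using this
  exact le_of_mul_le_mul_left h2 (lt_of_lt_of_le one_pos (gs_ge_one m))

lemma kern_lintegral (k : ℕ) (t : R2) : ∫⁻ x, ENNReal.ofReal (kern k (x - t)) = 1 := by
  rw [lintegral_sub_right_eq_self (fun x => ENNReal.ofReal (kern k x)),
    ← ofReal_integral_eq_lintegral_ofReal (kern_integrable k)
    (Eventually.of_forall (kern_nonneg k)), kern_integral]
  simp

/-- Young-type inequality for mollification of a nonnegative function. -/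
lemma young_lintegral (A K : Set R2) (k : ℕ) (f : R2 → ℝ)
    (hf : AEStronglyMeasurable f (volume.restrict A)) :
    ∫⁻ x in K, ∫⁻ t in A, ENNReal.ofReal (f t) * ENNReal.ofReal (kern k (x - t))
      ≤ ∫⁻ t in A, ENNReal.ofReal (f t) := by
  rw [lintegral_lintegral_swap]
  · refine lintegral_mono fun t => ?_
    rw [lintegral_const_mul]
    · calc _ ≤ ENNReal.ofReal (f t) * ∫⁻ x, ENNReal.ofReal (kern k (x - t)) := by
            gcongr
            exact Measure.restrict_le_self
        _ = _ := by rw [kern_lintegral, mul_one]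
    · exact ENNReal.measurable_ofReal.comp
        ((kern_cont k).comp (continuous_id.sub continuous_const)).measurable
  · have h1 : AEMeasurable (fun p : R2 × R2 => ENNReal.ofReal (f p.2))
        ((volume.restrict K).prod (volume.restrict A)) :=
      (hf.aemeasurable.ennreal_ofReal).comp_snd
    have h2 : Measurable (fun p : R2 × R2 => ENNReal.ofReal (kern k (p.1 - p.2))) :=
      ENNReal.measurable_ofReal.comp
        ((kern_cont k).comp (continuous_fst.sub continuous_snd)).measurable
    exact h1.mul h2.aemeasurable

lemma jensen_int (A K : Set R2) (hA : volume A ≠ ∞) (hK : MeasurableSet K) (k : ℕ) (H : R2 → M2)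
    (h : ∀ i j, IntegrableOn (fun x => H x i j) A)
    (hx : ∀ x ∈ K, closedBall x (1 / ((k : ℝ) + 1)) ⊆ A) :
    ∫⁻ x in K, ENNReal.ofReal (gs (molMat A k H x)) ≤ ∫⁻ x in A, ENNReal.ofReal (gs (H x)) := by
  have hg := gs_integrable A hA H h
  refine le_trans ?_ (young_lintegral A K k _ hg.1)
  refine setLIntegral_mono' hK fun x hxK => ?_
  refine (ENNReal.ofReal_le_ofReal (jensen_pt A hA k H h x (hx x hxK))).trans ?_
  rw [ofReal_integral_eq_lintegral_ofReal (mul_kern_integrable A k _ hg x)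
    (Eventually.of_forall fun t => mul_nonneg (gs_nonneg _) (kern_nonneg _ _))]
  refine lintegral_mono fun t => ?_
  rw [ENNReal.ofReal_mul (gs_nonneg _)]

/-- Classical gradients are weak gradients. -/
lemma classical_weak (A : Set R2) (hA : IsOpen A) (v : R2 → R2) (hv : ContDiffOn ℝ 1 v A) :
    IsWeakGradient A v (jacobianMatrix v) := by
  intro φ hφ hφc hφA i j
  set e : R2 := EuclideanSpace.single j 1
  have hdf : ∀ x ∈ A, HasFDerivAt v (fderiv ℝ v x) x := fun x hx =>
    ((hv.contDiffAt (hA.mem_nhds hx)).differentiableAt (by simp)).hasFDerivAt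
  have hcf : ContinuousOn (fderiv ℝ v) A := hv.continuousOn_fderiv_of_isOpen hA (by simp)
  have hcφ : Continuous (fderiv ℝ φ) := hφ.continuous_fderiv (by simp)
  have key : ∀ f : R2 → ℝ, ContinuousOn f A → ∀ ψ : R2 → ℝ, Continuous ψ →
      (∀ x, x ∉ tsupport φ → ψ x = 0) → Integrable (fun x => f x * ψ x) := by
    intro f hf ψ hψ h0
    have h1 : IntegrableOn (fun x => f x * ψ x) (tsupport φ) :=
      ((hf.mono hφA).mul hψ.continuousOn).integrableOn_compact hφc
    refine (integrableOn_iff_integrable_of_support_subset ?_).1 h1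
    intro x hx
    by_contra hn
    exact hx (by simp [h0 x hn])
  have hφ0 : ∀ x, x ∉ tsupport φ → φ x = 0 := fun x hx => image_eq_zero_of_notMem_tsupport hx
  have hdφ0 : ∀ x, x ∉ tsupport φ → fderiv ℝ φ x e = 0 := fun x hx => by
    have : fderiv ℝ φ x = 0 := by
      by_contra hne
      exact hx (support_fderiv_subset ℝ hne)
    simp [this]
  have hvi : ContinuousOn (fun x => v x i) A :=
    (EuclideanSpace.proj (𝕜 := ℝ) i).continuous.comp_continuousOn hv.continuousOn
  have hdvi : ContinuousOn (fun x => fderiv ℝ v x e i) A :=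
    (EuclideanSpace.proj (𝕜 := ℝ) i).continuous.comp_continuousOn (hcf.clm_apply continuousOn_const)
  have hdφ : Continuous (fun x => fderiv ℝ φ x e) := hcφ.clm_apply continuous_const
  have := integral_bilinear_hasLineDerivAt_right_eq_neg_left_of_integrable (μ := volume)
    (f := fun x => v x i) (f' := fun x => fderiv ℝ v x e i) (g := φ)
    (g' := fun x => fderiv ℝ φ x e) (v := e) (B := ContinuousLinearMap.mul ℝ ℝ)
    (key _ hdvi φ hφ.continuous hφ0) (key _ hvi _ hdφ hdφ0) (key _ hvi φ hφ.continuous hφ0)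
    (fun x hx => by
      have h1 := (EuclideanSpace.proj (𝕜 := ℝ) i).hasFDerivAt.comp x (hdf x (hφA hx))
      exact h1.hasLineDerivAt e)
    (fun x hx => ((hφ.differentiable (by simp)) x).hasFDerivAt.hasLineDerivAt e)
  simp only [ContinuousLinearMap.mul_apply'] at this
  rw [setIntegral_eq_integral_of_forall_compl_eq_zero,
    setIntegral_eq_integral_of_forall_compl_eq_zero]
  · exact this
  · intro x hx
    rw [hφ0 x (fun h => hx (hφA h)), mul_zero]
  · intro x hx
    rw [hdφ0 x (fun h => hx (hφA h)), mul_zero]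

lemma memW11_mono (Ω A : Set R2) (hAΩ : A ⊆ Ω) (u : R2 → R2) (G : R2 → M2)
    (h : MemW11 Ω u G) : MemW11 A u G := by
  obtain ⟨h1, h2, h3⟩ := h
  refine ⟨h1.mono_set hAΩ, fun i j => (h2 i j).mono_set hAΩ, ?_⟩
  intro φ hφ hφc hφA i j
  have := h3 φ hφ hφc (hφA.trans hAΩ) i j
  have hφ0 : ∀ x, x ∉ tsupport φ → φ x = 0 := fun x hx => image_eq_zero_of_notMem_tsupport hx
  have hdφ0 : ∀ x, x ∉ tsupport φ → fderiv ℝ φ x = 0 := fun x hx => by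
    by_contra hne
    exact hx (support_fderiv_subset ℝ hne)
  have e : ∀ B : Set R2, A ⊆ B →
      (∫ x in B, u x i * fderiv ℝ φ x (EuclideanSpace.single j 1))
        = ∫ x, u x i * fderiv ℝ φ x (EuclideanSpace.single j 1) := by
    intro B hB
    apply setIntegral_eq_integral_of_forall_compl_eq_zero
    intro x hx
    rw [hdφ0 x (fun h => hx (hB (hφA h)))]
    simp
  have e' : ∀ B : Set R2, A ⊆ B → (∫ x in B, G x i j * φ x) = ∫ x, G x i j * φ x := by
    intro B hB
    apply setIntegral_eq_integral_of_forall_compl_eq_zero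
    intro x hx
    rw [hφ0 x (fun h => hx (hB (hφA h))), mul_zero]
  rw [e _ hAΩ, e' _ hAΩ] at this
  rw [e _ subset_rfl, e' _ subset_rfl]
  exact this



def inn (A : Set R2) (n : ℕ) : Set R2 := {x | ENNReal.ofReal (1 / ((n : ℝ) + 1)) < infEDist x Aᶜ}

lemma inn_open (A : Set R2) (n : ℕ) : IsOpen (inn A n) :=
  isOpen_lt continuous_const continuous_infEDist

lemma inn_ball (A : Set R2) (n k : ℕ) (hk : n ≤ k) (x : R2) (hx : x ∈ inn A n) :
    closedBall x (1 / ((k : ℝ) + 1)) ⊆ A := by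
  intro y hy
  by_contra hn
  have h1 : infEDist x Aᶜ ≤ edist x y := infEDist_le_edist_of_mem hn
  have h2 : edist x y ≤ ENNReal.ofReal (1 / ((k : ℝ) + 1)) := by
    rw [edist_comm, edist_dist]
    exact ENNReal.ofReal_le_ofReal hy
  have h3 : ENNReal.ofReal (1 / ((k : ℝ) + 1)) ≤ ENNReal.ofReal (1 / ((n : ℝ) + 1)) := by
    apply ENNReal.ofReal_le_ofReal
    apply one_div_le_one_div_of_le
    · positivity
    · have : (n : ℝ) ≤ k := by exact_mod_cast hk
      linarith
  exact absurd (h1.trans (h2.trans h3)) (not_le.2 hx)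

lemma inn_subset (A : Set R2) (n : ℕ) : inn A n ⊆ A := fun x hx =>
  inn_ball A n n le_rfl x hx (mem_closedBall_self (by positivity))

lemma inn_mono (A : Set R2) : Monotone (inn A) := by
  intro n k hk x hx
  have hx' : ENNReal.ofReal (1 / ((n : ℝ) + 1)) < infEDist x Aᶜ := hx
  refine lt_of_le_of_lt ?_ hx'
  apply ENNReal.ofReal_le_ofReal
  apply one_div_le_one_div_of_le
  · positivity
  · have : (n : ℝ) ≤ k := by exact_mod_cast hk
    linarith

lemma inn_mono_set (A B : Set R2) (h : A ⊆ B) (n : ℕ) : inn A n ⊆ inn B n := fun _ hx =>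
  lt_of_lt_of_le hx (infEDist_anti (compl_subset_compl.2 h))

lemma inn_iUnion (A : Set R2) (hA : IsOpen A) : ⋃ n, inn A n = A := by
  apply Subset.antisymm (iUnion_subset fun n => inn_subset A n)
  intro x hx
  have h1 : 0 < infEDist x Aᶜ := by
    rw [infEDist_pos_iff_notMem_closure, hA.isClosed_compl.closure_eq]
    exact fun h => h hx
  have h2 : Tendsto (fun n : ℕ => ENNReal.ofReal (1 / ((n : ℝ) + 1))) atTop (𝓝 0) := by
    have := ENNReal.tendsto_ofReal (tendsto_one_div_add_atTop_nhds_zero_nat (𝕜 := ℝ))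
    simpa using this
  obtain ⟨n, hn⟩ := (h2.eventually_lt_const h1).exists
  exact mem_iUnion.2 ⟨n, hn⟩

def dMat (A : Set R2) (k : ℕ) (v : R2 → R2) (x : R2) : M2 :=
  Matrix.of fun i j => fderiv ℝ (mol A k (fun y => v y i)) x (EuclideanSpace.single j 1)

lemma dMat_eq (A : Set R2) (hA : MeasurableSet A) (k : ℕ) (u : R2 → R2) (G : R2 → M2)
    (h : MemW11 A u G) (x : R2) (hx : closedBall x (1 / ((k : ℝ) + 1)) ⊆ A) :
    dMat A k u x = molMat A k G x := by
  ext i j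
  exact mol_weak A hA k u G h x hx i j

lemma comp_integrable (A : Set R2) (v : R2 → R2) (hv : IntegrableOn v A) (i : Fin 2) :
    IntegrableOn (fun x => v x i) A :=
  (EuclideanSpace.proj (𝕜 := ℝ) i).integrable_comp hv

lemma dMat_cont (A : Set R2) (k : ℕ) (v : R2 → R2) (hv : IntegrableOn v A) :
    Continuous (dMat A k v) := by
  refine continuous_matrix fun i j => ?_
  exact ((mol_contDiff A k _ (comp_integrable A v hv i)).continuous_fderiv (by simp)).clm_apply
    continuous_const

lemma dMat_tendsto (A : Set R2) (hA : MeasurableSet A) (k : ℕ) (v : ℕ → R2 → R2) (u : R2 → R2)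
    (hv : ∀ l, IntegrableOn (v l) A) (hu : IntegrableOn u A)
    (h : Tendsto (fun l => ∫ x in A, ‖v l x - u x‖) atTop (𝓝 0)) (x : R2) :
    Tendsto (fun l => dMat A k (v l) x) atTop (𝓝 (dMat A k u x)) := by
  refine tendsto_pi_nhds.2 fun i => tendsto_pi_nhds.2 fun j => ?_
  set e : R2 := EuclideanSpace.single j 1
  show Tendsto (fun l => fderiv ℝ (mol A k (fun y => v l y i)) x e) atTop
    (𝓝 (fderiv ℝ (mol A k (fun y => u y i)) x e))
  have hdc : Continuous (fun t => fderiv ℝ (kern k) t e) :=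
    ((kern_contDiff k).continuous_fderiv (by simp)).clm_apply continuous_const
  obtain ⟨C, hC⟩ : ∃ C, ∀ t, ‖fderiv ℝ (kern k) t e‖ ≤ C := by
    refine HasCompactSupport.exists_bound_of_continuous ?_ hdc
    exact (kern_compact k).fderiv_apply ℝ e
  have hI : ∀ f : R2 → ℝ, IntegrableOn f A →
      IntegrableOn (fun t => f t * fderiv ℝ (kern k) (x - t) e) A := fun f hf =>
    Integrable.mul_bdd (c := C) hf
      (hdc.comp (continuous_const.sub continuous_id)).aestronglyMeasurable
      (Eventually.of_forall fun t => hC _)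
  rw [tendsto_iff_norm_sub_tendsto_zero]
  refine squeeze_zero (fun _ => norm_nonneg _) ?_ (by simpa using h.mul_const C)
  intro l
  rw [mol_fderiv A hA k _ (comp_integrable A _ (hv l) i),
    mol_fderiv A hA k _ (comp_integrable A _ hu i),
    ← integral_sub (hI _ (comp_integrable A _ (hv l) i)) (hI _ (comp_integrable A _ hu i)),
    ← integral_mul_const]
  refine norm_integral_le_of_norm_le (((hv l).sub hu).norm.mul_const C) ?_
  refine Eventually.of_forall fun t => ?_
  rw [← sub_mul, norm_mul]
  have h1 : ‖v l t i - u t i‖ ≤ ‖v l t - u t‖ := by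
    have := PiLp.norm_apply_le (v l t - u t) i
    simpa using this
  exact mul_le_mul h1 (hC _) (norm_nonneg _) (norm_nonneg _)

lemma classicalArea_ge (A : Set R2) (v : R2 → R2) :
    ∫⁻ x in A, ENNReal.ofReal (gs (jacobianMatrix v x)) ≤ classicalArea A v := by
  refine lintegral_mono fun x => ENNReal.ofReal_le_ofReal (Real.sqrt_le_sqrt ?_)
  nlinarith [sq_nonneg (jacobianMatrix v x).det]

lemma jac_integrable (A : Set R2) (hA : IsOpen A) (v : R2 → R2) (hv : ContDiffOn ℝ 1 v A)
    (hfin : classicalArea A v ≠ ∞) (i j : Fin 2) :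
    IntegrableOn (fun x => jacobianMatrix v x i j) A := by
  have hcf : ContinuousOn (fderiv ℝ v) A := hv.continuousOn_fderiv_of_isOpen hA (by simp)
  have hc : ContinuousOn (fun x => jacobianMatrix v x i j) A :=
    (EuclideanSpace.proj (𝕜 := ℝ) i).continuous.comp_continuousOn (hcf.clm_apply continuousOn_const)
  refine ⟨hc.aestronglyMeasurable hA.measurableSet, ?_⟩
  rw [hasFiniteIntegral_iff_norm]
  refine lt_of_le_of_lt ?_ (lt_top_iff_ne_top.2 hfin)
  refine le_trans ?_ (classicalArea_ge A v)
  exact lintegral_mono fun x => ENNReal.ofReal_le_ofReal (abs_le_gs _ i j)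

lemma lower_step (A : Set R2) (hA : IsOpen A) (hvol : volume A ≠ ∞) (n k : ℕ) (hk : n ≤ k)
    (v : R2 → R2) (hv : ContDiffOn ℝ 1 v A) (hvi : IntegrableOn v A) :
    ∫⁻ x in inn A n, ENNReal.ofReal (gs (dMat A k v x)) ≤ classicalArea A v := by
  by_cases hfin : classicalArea A v = ∞
  · rw [hfin]; exact le_top
  have hj := jac_integrable A hA v hv hfin
  have hW : MemW11 A v (jacobianMatrix v) := ⟨hvi, hj, classical_weak A hA v hv⟩
  refine le_trans ?_ (classicalArea_ge A v)
  refine le_trans (le_of_eq ?_) (jensen_int A (inn A n) hvol (inn_open A n).measurableSet k _ hj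
    fun x hx => inn_ball A n k hk x hx)
  refine setLIntegral_congr_fun (inn_open A n).measurableSet fun x hx => ?_
  rw [dMat_eq A hA.measurableSet k v _ hW x (inn_ball A n k hk x hx)]

theorem lower_bound (A : Set R2) (hA : IsOpen A) (hvol : volume A ≠ ∞) (u : R2 → R2) (G : R2 → M2)
    (h : MemW11 A u G) :
    ∫⁻ x in A, ENNReal.ofReal (gs (G x)) ≤ relaxedArea u A := by
  refine le_sInf ?_
  rintro a ⟨v, hv, hvu, hlim, rfl⟩
  have hvi : ∀ l, IntegrableOn (v l) A := fun l => by
    have := (hvu l).add h.1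
    refine this.congr (Eventually.of_forall fun x => ?_)
    simp
  have h1 : ∀ n k, n ≤ k → ∫⁻ x in inn A n, ENNReal.ofReal (gs (dMat A k u x))
      ≤ liminf (fun l => classicalArea A (v l)) atTop := by
    intro n k hk
    calc ∫⁻ x in inn A n, ENNReal.ofReal (gs (dMat A k u x))
        = ∫⁻ x in inn A n, liminf (fun l => ENNReal.ofReal (gs (dMat A k (v l) x))) atTop := by
          refine lintegral_congr fun x => ?_
          have := (ENNReal.continuous_ofReal.comp gs_cont).continuousAt.tendsto.comp
            (dMat_tendsto A hA.measurableSet k v u hvi h.1 hlim x)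
          exact this.liminf_eq.symm
      _ ≤ liminf (fun l => ∫⁻ x in inn A n, ENNReal.ofReal (gs (dMat A k (v l) x))) atTop :=
          lintegral_liminf_le fun l => ((ENNReal.continuous_ofReal.comp gs_cont).comp
            (dMat_cont A k (v l) (hvi l))).measurable
      _ ≤ _ := by
          refine liminf_le_liminf (Eventually.of_forall fun l => ?_)
          exact lower_step A hA hvol n k hk (v l) (hv l) (hvi l)
  have h2 : ∀ n, ∫⁻ x in inn A n, ENNReal.ofReal (gs (G x))
      ≤ liminf (fun l => classicalArea A (v l)) atTop := by
    intro n
    have hae : ∀ᵐ x ∂(volume.restrict (inn A n)),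
        Tendsto (fun k => ENNReal.ofReal (gs (dMat A k u x))) atTop
          (𝓝 (ENNReal.ofReal (gs (G x)))) := by
      have h3 : ∀ᵐ x ∂(volume.restrict A), ∀ i j,
          Tendsto (fun k => mol A k (fun y => G y i j) x) atTop (𝓝 (G x i j)) := by
        rw [ae_all_iff]; intro i
        rw [ae_all_iff]; intro j
        exact mol_ae A hA.measurableSet _ (h.2.1 i j)
      filter_upwards [ae_restrict_of_ae_restrict_of_subset (inn_subset A n) h3,
        ae_restrict_mem (inn_open A n).measurableSet] with x hx hxn
      have h4 : Tendsto (fun k => molMat A k G x) atTop (𝓝 (G x)) :=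
        tendsto_pi_nhds.2 fun i => tendsto_pi_nhds.2 fun j => hx i j
      have h5 := (ENNReal.continuous_ofReal.comp gs_cont).continuousAt.tendsto.comp h4
      refine h5.congr' ?_
      filter_upwards [eventually_ge_atTop n] with k hk
      simp only [Function.comp]
      rw [dMat_eq A hA.measurableSet k u G h x (inn_ball A n k hk x hxn)]
    calc ∫⁻ x in inn A n, ENNReal.ofReal (gs (G x))
        = ∫⁻ x in inn A n, liminf (fun k => ENNReal.ofReal (gs (dMat A k u x))) atTop :=
          lintegral_congr_ae (hae.mono fun x hx => hx.liminf_eq.symm)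
      _ ≤ liminf (fun k => ∫⁻ x in inn A n, ENNReal.ofReal (gs (dMat A k u x))) atTop :=
          lintegral_liminf_le fun k => ((ENNReal.continuous_ofReal.comp gs_cont).comp
            (dMat_cont A k u h.1)).measurable
      _ ≤ _ := by
          refine liminf_le_of_frequently_le' ?_
          refine Eventually.frequently ?_
          filter_upwards [eventually_ge_atTop n] with k hk
          exact h1 n k hk
  rw [← inn_iUnion A hA, setLIntegral_iUnion_of_directed _ (inn_mono A).directed_le]
  rw [inn_iUnion A hA]
  exact iSup_le h2



lemma arg_hasStrictFDerivAt (z : ℂ) (hz : z ∈ Complex.slitPlane) :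
    HasStrictFDerivAt Complex.arg (Complex.imCLM.comp (z⁻¹ • (1 : ℂ →L[ℝ] ℂ))) z := by
  have h := Complex.imCLM.hasStrictFDerivAt.comp z (Complex.hasStrictFDerivAt_log_real hz)
  have e : Complex.arg = (Complex.imCLM : ℂ → ℝ) ∘ Complex.log := by
    ext w; simp [Complex.log_im]
  rw [e]
  exact h

lemma arg_contDiffAt (z : ℂ) (hz : z ∈ Complex.slitPlane) : ContDiffAt ℝ 1 Complex.arg z := by
  have e : Complex.arg = (Complex.imCLM : ℂ → ℝ) ∘ Complex.log := by
    ext w; simp [Complex.log_im]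
  rw [e]
  exact Complex.imCLM.contDiff.contDiffAt.comp z
    ((Complex.contDiffAt_log (n := 1) hz).restrict_scalars ℝ)

lemma arg_deriv_norm (z : ℂ) : ‖Complex.imCLM.comp (z⁻¹ • (1 : ℂ →L[ℝ] ℂ))‖ ≤ ‖z‖⁻¹ := by
  refine (ContinuousLinearMap.opNorm_comp_le _ _).trans ?_
  rw [Complex.imCLM_norm, one_mul, norm_smul, norm_inv]
  simp

/-- One dimensional cutoff: vanishes for `|t| ≤ 1/2`, equals one for `|t| ≥ 1`. -/
def cutS (t : ℝ) : ℝ := Real.smoothTransition (2 * t ^ 2 - 1)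

/-- One dimensional cutoff: vanishes for `t ≤ 1/4`, equals one for `t ≥ 1/2`. -/
def cutT (t : ℝ) : ℝ := Real.smoothTransition (4 * t - 1)

lemma cutS_contDiff : ContDiff ℝ 1 cutS := by
  have : ContDiff ℝ 1 Real.smoothTransition := Real.smoothTransition.contDiff (n := 1)
  exact this.comp (by fun_prop)

lemma cutT_contDiff : ContDiff ℝ 1 cutT := by
  have : ContDiff ℝ 1 Real.smoothTransition := Real.smoothTransition.contDiff (n := 1)
  exact this.comp (by fun_prop)

lemma bdd_of_zero_outside (f : ℝ → ℝ) (hf : Continuous f) (h : ∀ t, 1 < |t| → f t = 0) :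
    ∃ C, 0 ≤ C ∧ ∀ t, |f t| ≤ C := by
  obtain ⟨C, hC⟩ := (isCompact_Icc (a := (-1 : ℝ)) (b := 1)).exists_bound_of_continuousOn
    hf.continuousOn
  refine ⟨max C 0, le_max_right _ _, fun t => ?_⟩
  by_cases ht : 1 < |t|
  · rw [h t ht]; simp
  · exact (hC t (abs_le.1 (not_lt.1 ht))).trans (le_max_left _ _)

lemma cutS_deriv_bdd : ∃ C, 0 ≤ C ∧ ∀ t, |deriv cutS t| ≤ C := by
  apply bdd_of_zero_outside _ (cutS_contDiff.continuous_deriv le_rfl)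
  intro t ht
  have : cutS =ᶠ[𝓝 t] fun _ => (1 : ℝ) := by
    filter_upwards [continuous_abs.continuousAt.eventually (lt_mem_nhds ht)] with s hs
    apply Real.smoothTransition.one_of_one_le
    have : 1 < s ^ 2 := by rw [← sq_abs]; nlinarith
    linarith
  rw [this.deriv_eq]; simp

lemma cutT_deriv_bdd : ∃ C, 0 ≤ C ∧ ∀ t, |deriv cutT t| ≤ C := by
  apply bdd_of_zero_outside _ (cutT_contDiff.continuous_deriv le_rfl)
  intro t ht
  rcases lt_abs.1 ht with h | h
  · have : cutT =ᶠ[𝓝 t] fun _ => (1 : ℝ) := by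
      filter_upwards [lt_mem_nhds h] with s hs
      apply Real.smoothTransition.one_of_one_le
      linarith
    rw [this.deriv_eq]; simp
  · have : cutT =ᶠ[𝓝 t] fun _ => (0 : ℝ) := by
      filter_upwards [gt_mem_nhds (show t < -1 by linarith)] with s hs
      apply Real.smoothTransition.zero_of_nonpos
      linarith
    rw [this.deriv_eq]; simp

lemma cutS_mem (t : ℝ) : 0 ≤ cutS t ∧ cutS t ≤ 1 :=
  ⟨Real.smoothTransition.nonneg _, Real.smoothTransition.le_one _⟩

lemma cutT_mem (t : ℝ) : 0 ≤ cutT t ∧ cutT t ≤ 1 :=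
  ⟨Real.smoothTransition.nonneg _, Real.smoothTransition.le_one _⟩

lemma cutS_zero (t : ℝ) (h : |t| ≤ 1 / 2) : cutS t = 0 := by
  apply Real.smoothTransition.zero_of_nonpos
  have : t ^ 2 ≤ 1 / 4 := by
    rw [← sq_abs]; nlinarith [abs_nonneg t]
  linarith

lemma cutS_one (t : ℝ) (h : 1 ≤ |t|) : cutS t = 1 := by
  apply Real.smoothTransition.one_of_one_le
  have : 1 ≤ t ^ 2 := by rw [← sq_abs]; nlinarith
  linarith

lemma cutT_zero (t : ℝ) (h : t ≤ 1 / 4) : cutT t = 0 := by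
  apply Real.smoothTransition.zero_of_nonpos
  linarith

lemma cutT_one (t : ℝ) (h : 1 / 2 ≤ t) : cutT t = 1 := by
  apply Real.smoothTransition.one_of_one_le
  linarith

def chi (δ : ℝ) (z : ℂ) : ℝ := 1 - (1 - cutS (z.im / δ)) * (1 - cutT z.re)

lemma chi_mem (δ : ℝ) (z : ℂ) : 0 ≤ chi δ z ∧ chi δ z ≤ 1 := by
  unfold chi
  obtain ⟨a, b⟩ := cutS_mem (z.im / δ)
  obtain ⟨c, d⟩ := cutT_mem z.re
  constructor <;> nlinarith

lemma chi_zero (δ : ℝ) (hδ : 0 < δ) (z : ℂ) (h1 : |z.im| ≤ δ / 2) (h2 : z.re ≤ 1 / 4) :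
    chi δ z = 0 := by
  unfold chi
  rw [cutT_zero _ h2, cutS_zero]
  · simp
  · rw [abs_div, abs_of_pos hδ, div_le_iff₀ hδ]; linarith

lemma chi_one (δ : ℝ) (hδ : 0 < δ) (z : ℂ) (h : δ ≤ |z.im| ∨ 1 / 2 ≤ z.re) :
    chi δ z = 1 := by
  unfold chi
  rcases h with h | h
  · rw [cutS_one]
    · simp
    · rw [abs_div, abs_of_pos hδ, le_div_iff₀ hδ]; linarith
  · rw [cutT_one _ h]; simp

lemma chi_contDiff (δ : ℝ) : ContDiff ℝ 1 (chi δ) := by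
  unfold chi
  have h1 : ContDiff ℝ 1 (fun z : ℂ => z.im) := Complex.imCLM.contDiff
  have h2 : ContDiff ℝ 1 (fun z : ℂ => z.re) := Complex.reCLM.contDiff
  have h3 : ContDiff ℝ 1 (fun z : ℂ => cutS (z.im / δ)) := cutS_contDiff.comp (h1.div_const δ)
  have h4 : ContDiff ℝ 1 (fun z : ℂ => cutT z.re) := cutT_contDiff.comp h2
  exact contDiff_const.sub ((contDiff_const.sub h3).mul (contDiff_const.sub h4))

lemma chi_deriv_bdd : ∃ C, 0 ≤ C ∧ ∀ δ, 0 < δ → δ ≤ 1 → ∀ z, ‖fderiv ℝ (chi δ) z‖ ≤ C / δ := by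
  obtain ⟨C1, h1, hC1⟩ := cutS_deriv_bdd
  obtain ⟨C2, h2, hC2⟩ := cutT_deriv_bdd
  refine ⟨C1 + C2, by positivity, fun δ hδ hδ1 z => ?_⟩
  have d1 : HasFDerivAt (fun z : ℂ => cutS (z.im / δ))
      (deriv cutS (z.im / δ) • (δ⁻¹ • Complex.imCLM)) z := by
    have a : HasDerivAt cutS (deriv cutS (z.im / δ)) (z.im / δ) :=
      (cutS_contDiff.differentiable (by simp) _).hasDerivAt
    have b : HasFDerivAt (fun z : ℂ => z.im / δ) (δ⁻¹ • Complex.imCLM) z := by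
      have := (Complex.imCLM.hasFDerivAt (x := z)).const_smul δ⁻¹
      refine this.congr_of_eventuallyEq (Eventually.of_forall fun w => ?_)
      simp [div_eq_inv_mul]
    exact HasDerivAt.comp_hasFDerivAt (h₂ := cutS) (f := fun z : ℂ => z.im / δ) z a b
  have d2 : HasFDerivAt (fun z : ℂ => cutT z.re) (deriv cutT z.re • Complex.reCLM) z := by
    have a : HasDerivAt cutT (deriv cutT z.re) z.re :=
      (cutT_contDiff.differentiable (by simp) _).hasDerivAt
    exact HasDerivAt.comp_hasFDerivAt (h₂ := cutT) (f := fun z : ℂ => z.re) z a (Complex.reCLM.hasFDerivAt (x := z))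
  have d := ((d1.const_sub 1).mul (d2.const_sub 1)).const_sub 1
  have e : fderiv ℝ (chi δ) z = _ := d.fderiv
  rw [e, norm_neg]
  refine (norm_add_le _ _).trans ?_
  simp only [norm_smul, norm_neg, Complex.imCLM_norm, Complex.reCLM_norm, Real.norm_eq_abs, mul_one]
  have b1 : |1 - cutS (z.im / δ)| ≤ 1 := by
    have := cutS_mem (z.im / δ); rw [abs_le]; constructor <;> linarith
  have b2 : |1 - cutT z.re| ≤ 1 := by
    have := cutT_mem z.re; rw [abs_le]; constructor <;> linarith
  have i1 : |δ⁻¹| = δ⁻¹ := abs_of_pos (by positivity)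
  rw [i1]
  have i2 : 1 ≤ δ⁻¹ := (one_le_inv₀ hδ).2 hδ1
  calc _ ≤ 1 * C2 + 1 * (C1 * δ⁻¹) := by
        gcongr
        · exact hC2 _
        · exact hC1 _
    _ ≤ C2 * δ⁻¹ + C1 * δ⁻¹ := by nlinarith
    _ = _ := by ring

theorem psi_exists : ∃ C, 0 ≤ C ∧ ∀ δ, 0 < δ → δ ≤ 1 / 8 → ∃ ψ : ℂ → ℝ, ContDiff ℝ 1 ψ ∧
    (∀ z, ‖fderiv ℝ ψ z‖ ≤ C / δ) ∧
    ∀ z : ℂ, ‖z‖ = 1 → (δ < |z.im| ∨ 0 ≤ z.re) →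
      Complex.exp (ψ z * Complex.I) = z ∧ ‖fderiv ℝ ψ z‖ ≤ 1 := by
  obtain ⟨C, hC0, hC⟩ := chi_deriv_bdd
  refine ⟨Real.pi * C + 2, by positivity, fun δ hδ hδ1 => ?_⟩
  have hcim : Continuous (fun w : ℂ => |w.im|) := Complex.continuous_im.abs
  -- near points outside the slit plane the function vanishes
  have hzero : ∀ z, z ∉ Complex.slitPlane →
      (fun z => chi δ z * Complex.arg z) =ᶠ[𝓝 z] fun _ => (0 : ℝ) := by
    intro z hz
    rw [Complex.mem_slitPlane_iff] at hz
    push Not at hz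
    have a1 : |z.im| < δ / 2 := by rw [hz.2]; simpa using by linarith
    have a2 : z.re < 1 / 4 := by linarith [hz.1]
    filter_upwards [hcim.continuousAt.eventually (gt_mem_nhds a1),
      Complex.continuous_re.continuousAt.eventually (gt_mem_nhds a2)] with w h1 h2
    rw [chi_zero δ hδ w h1.le h2.le, zero_mul]
  refine ⟨fun z => chi δ z * Complex.arg z, ?_, ?_, ?_⟩
  · rw [contDiff_iff_contDiffAt]
    intro z
    by_cases hz : z ∈ Complex.slitPlane
    · exact (chi_contDiff δ).contDiffAt.mul (arg_contDiffAt z hz)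
    · exact contDiffAt_const.congr_of_eventuallyEq (hzero z hz)
  · intro z
    by_cases hz : z ∈ Complex.slitPlane
    · have d1 : HasFDerivAt (chi δ) (fderiv ℝ (chi δ) z) z :=
        ((chi_contDiff δ).differentiable (by simp) z).hasFDerivAt
      have d := d1.mul (arg_hasStrictFDerivAt z hz).hasFDerivAt
      have e : fderiv ℝ (fun z => chi δ z * Complex.arg z) z = _ := d.fderiv
      rw [e]
      refine (norm_add_le _ _).trans ?_
      rw [norm_smul, norm_smul, Real.norm_eq_abs, Real.norm_eq_abs]
      have b1 : |Complex.arg z| * ‖fderiv ℝ (chi δ) z‖ ≤ Real.pi * (C / δ) :=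
        mul_le_mul (Complex.abs_arg_le_pi z) (hC δ hδ (by linarith) z) (norm_nonneg _)
          Real.pi_pos.le
      have b2 : |chi δ z| * ‖Complex.imCLM.comp (z⁻¹ • (1 : ℂ →L[ℝ] ℂ))‖ ≤ 2 / δ := by
        by_cases hs : |z.im| ≤ δ / 2 ∧ z.re ≤ 1 / 4
        · rw [chi_zero δ hδ z hs.1 hs.2]; simp; positivity
        · have hn : δ / 2 ≤ ‖z‖ := by
            rw [not_and_or] at hs
            rcases hs with hs | hs
            · exact (not_le.1 hs).le.trans (Complex.abs_im_le_norm z)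
            · have := (le_abs_self _).trans (Complex.abs_re_le_norm z)
              linarith [not_le.1 hs]
          have h3 : ‖z‖⁻¹ ≤ 2 / δ := by
            have := inv_anti₀ (by positivity) hn
            rwa [inv_div] at this
          have h4 : |chi δ z| ≤ 1 := by
            have := chi_mem δ z; rw [abs_le]; constructor <;> linarith
          calc _ ≤ 1 * (2 / δ) := mul_le_mul h4 ((arg_deriv_norm z).trans h3) (norm_nonneg _)
                zero_le_one
            _ = _ := one_mul _
      calc _ ≤ 2 / δ + Real.pi * (C / δ) := add_le_add b2 b1
        _ = _ := by ring
    · rw [(hzero z hz).fderiv_eq]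
      simp
      positivity
  · intro z hz hg
    have hz' : Complex.normSq z = 1 := by rw [Complex.normSq_eq_norm_sq, hz]; norm_num
    rw [Complex.normSq_apply] at hz'
    have hg' : δ < |z.im| ∨ 1 / 2 < z.re := by
      by_cases h : δ < |z.im|
      · exact Or.inl h
      · right
        have h0 : 0 ≤ z.re := hg.resolve_left h
        have h1 : z.im ^ 2 ≤ 1 / 64 := by
          rw [← sq_abs]; nlinarith [abs_nonneg z.im, not_lt.1 h]
        nlinarith
    have hsl : z ∈ Complex.slitPlane := by
      rw [Complex.mem_slitPlane_iff]
      rcases hg' with h | h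
      · right
        intro h0
        rw [h0] at h
        simp at h
        linarith
      · left; linarith
    have hev : (fun z => chi δ z * Complex.arg z) =ᶠ[𝓝 z] Complex.arg := by
      rcases hg' with h | h
      · filter_upwards [hcim.continuousAt.eventually (lt_mem_nhds h)] with w hw
        rw [chi_one δ hδ w (Or.inl hw.le), one_mul]
      · filter_upwards [Complex.continuous_re.continuousAt.eventually (lt_mem_nhds h)] with w hw
        rw [chi_one δ hδ w (Or.inr hw.le), one_mul]
    constructor
    · have := hev.eq_of_nhds
      simp only at this ⊢
      rw [this]
      have h5 := Complex.norm_mul_exp_arg_mul_I z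
      rw [hz] at h5
      simpa using h5
    · rw [hev.fderiv_eq, (arg_hasStrictFDerivAt z hsl).hasFDerivAt.fderiv]
      refine (arg_deriv_norm z).trans ?_
      rw [hz]; simp



/-- Rotated coordinate isometry from the plane to `ℂ`. -/
def rotL (β : ℝ) : R2 →L[ℝ] ℂ :=
  (ContinuousLinearMap.mul ℝ ℂ (Complex.exp (((-β : ℝ) : ℂ) * Complex.I))).comp
    (Complex.orthonormalBasisOneI.repr.symm.toContinuousLinearEquiv : R2 →L[ℝ] ℂ)

lemma rotL_apply (β : ℝ) (y : R2) :
    rotL β y = Complex.exp (((-β : ℝ) : ℂ) * Complex.I) * (y 0 + y 1 * Complex.I) := by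
  simp [rotL, Complex.orthonormalBasisOneI_repr_symm_apply]

lemma rotL_norm_apply (β : ℝ) (y : R2) : ‖rotL β y‖ = ‖y‖ := by
  have : rotL β y = Complex.exp (((-β : ℝ) : ℂ) * Complex.I) *
    (Complex.orthonormalBasisOneI.repr.symm y) := rfl
  rw [this, norm_mul, Complex.norm_exp_ofReal_mul_I, one_mul, LinearIsometryEquiv.norm_map]

lemma rotL_norm (β : ℝ) : ‖rotL β‖ ≤ 1 :=
  ContinuousLinearMap.opNorm_le_bound _ zero_le_one fun y => by
    rw [rotL_norm_apply, one_mul]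

lemma rot_arith (c t a b y0 y1 δ : ℝ) (ht : 0 ≤ t) (ht2 : t ≤ 1 / 2) (hc : 1 / 2 ≤ c) (hc1 : c ≤ 1)
    (hδ : 0 < δ) (hδ1 : δ ≤ 1 / 8) (h1 : a ^ 2 + b ^ 2 = 1) (ha : a < 0) (hb : |b| ≤ δ)
    (e0 : y0 = c * a - t * b) (e1 : y1 = t * a + c * b) : y0 < 0 ∧ |y1 + t| ≤ 2 * δ := by
  have hb' := abs_le.1 hb
  have hb2 : b ^ 2 ≤ δ ^ 2 := by nlinarith
  have h3 : a + 1 ≤ δ ^ 2 := by nlinarith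
  have h4 : 0 ≤ a + 1 := by nlinarith
  have h5 : δ ^ 2 ≤ δ / 8 := by nlinarith
  have h6 : a ≤ - 1/2 := by nlinarith
  have h7 : |t * b| ≤ 1/16 := by
    rw [abs_mul, abs_of_nonneg ht]; nlinarith [abs_nonneg b]
  have h8 : |c * b| ≤ δ := by
    rw [abs_mul, abs_of_nonneg (by linarith)]; nlinarith [abs_nonneg b]
  rw [abs_le] at h7 h8
  constructor
  · rw [e0]; nlinarith
  · rw [e1, show t * a + c * b + t = t * (a + 1) + c * b by ring, abs_le]
    constructor <;> nlinarith [mul_nonneg ht h4]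

theorem Psi_exists : ∃ C, 0 ≤ C ∧ ∀ δ, 0 < δ → δ ≤ 1 / 8 → ∀ t : ℝ, 0 ≤ t → t ≤ 1 / 2 →
    ∃ Ψ : R2 → ℝ, ContDiff ℝ 1 Ψ ∧ (∀ y, ‖fderiv ℝ Ψ y‖ ≤ C / δ) ∧
    ∀ y : R2, ‖y‖ = 1 → ¬ (y 0 < 0 ∧ |y 1 + t| ≤ 2 * δ) →
      Real.cos (Ψ y) = y 0 ∧ Real.sin (Ψ y) = y 1 ∧ ‖fderiv ℝ Ψ y‖ ≤ 1 := by
  obtain ⟨C, hC0, hC⟩ := psi_exists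
  refine ⟨C, hC0, fun δ hδ hδ1 t ht ht2 => ?_⟩
  obtain ⟨ψ, hψ, hψd, hψ1⟩ := hC δ hδ hδ1
  set β := Real.arcsin t with hβ
  have hs : Real.sin β = t := Real.sin_arcsin (by linarith) (by linarith)
  have hc : Real.cos β = Real.sqrt (1 - t ^ 2) := Real.cos_arcsin t
  have hc2 : 1 / 2 ≤ Real.cos β := by
    rw [hc]; apply Real.le_sqrt_of_sq_le; nlinarith
  have hd : ∀ y, fderiv ℝ (fun y => β + ψ (rotL β y)) y = (fderiv ℝ ψ (rotL β y)).comp (rotL β) := by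
    intro y
    have := (((hψ.differentiable (by simp) (rotL β y)).hasFDerivAt).comp y
      (rotL β).hasFDerivAt).const_add β
    exact this.fderiv
  have hn : ∀ y, ‖fderiv ℝ (fun y => β + ψ (rotL β y)) y‖ ≤ ‖fderiv ℝ ψ (rotL β y)‖ := by
    intro y
    rw [hd]
    refine (ContinuousLinearMap.opNorm_comp_le _ _).trans ?_
    exact mul_le_of_le_one_right (norm_nonneg _) (rotL_norm β)
  refine ⟨fun y => β + ψ (rotL β y), contDiff_const.add (hψ.comp (rotL β).contDiff),
    fun y => (hn y).trans (hψd _), fun y hy hbad => ?_⟩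
  have hcase : δ < |(rotL β y).im| ∨ 0 ≤ (rotL β y).re := by
    by_contra hcon
    push Not at hcon
    apply hbad
    have hw : Complex.exp ((β : ℂ) * Complex.I) * rotL β y = y 0 + y 1 * Complex.I := by
      rw [rotL_apply, ← mul_assoc, ← Complex.exp_add]; simp
    have hnorm : (rotL β y).re ^ 2 + (rotL β y).im ^ 2 = 1 := by
      have h := Complex.sq_norm (rotL β y)
      rw [rotL_norm_apply, hy, Complex.normSq_apply] at h
      nlinarith
    have r := congrArg Complex.re hw
    have i := congrArg Complex.im hw
    simp only [Complex.mul_re, Complex.mul_im, Complex.exp_ofReal_mul_I_re,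
      Complex.exp_ofReal_mul_I_im, Complex.add_re, Complex.add_im, Complex.ofReal_re,
      Complex.ofReal_im, Complex.I_re, Complex.I_im, hs] at r i
    refine rot_arith (Real.cos β) t (rotL β y).re (rotL β y).im (y 0) (y 1) δ ht ht2 hc2
      (Real.cos_le_one _) hδ hδ1 hnorm hcon.2 hcon.1 ?_ ?_
    · linarith
    · linarith
  obtain ⟨h1, h2⟩ := hψ1 (rotL β y) (by rw [rotL_norm_apply, hy]) hcase
  have hE : Complex.exp (((β + ψ (rotL β y) : ℝ) : ℂ) * Complex.I) = y 0 + y 1 * Complex.I := by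
    rw [Complex.ofReal_add, add_mul, Complex.exp_add, h1, rotL_apply, ← mul_assoc,
      ← Complex.exp_add]
    simp
  refine ⟨?_, ?_, (hn y).trans h2⟩
  · have := congrArg Complex.re hE
    rw [Complex.exp_ofReal_mul_I_re] at this
    simpa using this
  · have := congrArg Complex.im hE
    rw [Complex.exp_ofReal_mul_I_im] at this
    simpa using this



lemma scheffe_sub {X : Type*} [MeasurableSpace X] (μ : Measure X) (b : ℕ → X → ℝ≥0∞) (c : X → ℝ≥0∞)
    (hb : ∀ k, AEMeasurable (b k) μ) (hc : AEMeasurable c μ) (hcf : ∀ x, c x ≠ ∞)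
    (hci : ∫⁻ x, c x ∂μ ≠ ∞) (hle : ∀ k, ∫⁻ x, b k x ∂μ ≤ ∫⁻ x, c x ∂μ)
    (hlim : ∀ᵐ x ∂μ, Tendsto (fun k => b k x) atTop (𝓝 (c x))) :
    Tendsto (fun k => ∫⁻ x, (b k x - c x) ∂μ) atTop (𝓝 0) := by
  have h1 : Tendsto (fun k => ∫⁻ x, (c x - b k x) ∂μ) atTop (𝓝 (∫⁻ _, 0 ∂μ)) := by
    refine tendsto_lintegral_of_dominated_convergence' c (fun k => hc.sub (hb k))
      (fun k => Eventually.of_forall fun x => tsub_le_self) hci ?_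
    filter_upwards [hlim] with x hx
    have := ENNReal.Tendsto.sub (tendsto_const_nhds (x := c x)) hx (Or.inl (hcf x))
    simpa using this
  rw [lintegral_zero] at h1
  refine tendsto_of_tendsto_of_tendsto_of_le_of_le tendsto_const_nhds h1 (fun _ => zero_le) ?_
  intro k
  have e : ∫⁻ x, (b k x - c x) ∂μ + ∫⁻ x, c x ∂μ = ∫⁻ x, (c x - b k x) ∂μ + ∫⁻ x, b k x ∂μ := by
    rw [← lintegral_add_right' _ hc, ← lintegral_add_right' _ (hb k)]
    refine lintegral_congr fun x => ?_
    rw [tsub_add_eq_max, tsub_add_eq_max, max_comm]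
  have h2 : ∫⁻ x, (b k x - c x) ∂μ + ∫⁻ x, c x ∂μ ≤ ∫⁻ x, (c x - b k x) ∂μ + ∫⁻ x, c x ∂μ := by
    rw [e]; exact add_le_add le_rfl (hle k)
  exact (ENNReal.add_le_add_iff_right hci).1 h2

/-- Generalized dominated convergence, upper bound form. -/
lemma pratt {X : Type*} [MeasurableSpace X] (μ : Measure X) (A : Set X) (hA : MeasurableSet A)
    (a : ℕ → X → ℝ≥0∞) (a' : X → ℝ≥0∞) (b : ℕ → X → ℝ≥0∞) (c : X → ℝ≥0∞)
    (ha : ∀ k, AEMeasurable (a k) (μ.restrict A))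
    (hb : ∀ k, AEMeasurable (b k) μ) (hc : AEMeasurable c μ) (hcf : ∀ x, c x ≠ ∞)
    (hci : ∫⁻ x, c x ∂μ ≠ ∞) (hle : ∀ k, ∫⁻ x, b k x ∂μ ≤ ∫⁻ x, c x ∂μ)
    (hlim : ∀ᵐ x ∂μ, Tendsto (fun k => b k x) atTop (𝓝 (c x)))
    (hab : ∀ᶠ k in atTop, ∀ x ∈ A, a k x ≤ b k x)
    (halim : ∀ᵐ x ∂(μ.restrict A), Tendsto (fun k => a k x) atTop (𝓝 (a' x)))
    (ε : ℝ≥0∞) (hε : ε ≠ 0) :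
    ∀ᶠ k in atTop, ∫⁻ x in A, a k x ∂μ ≤ ∫⁻ x in A, a' x ∂μ + ε := by
  have hlimA : ∀ᵐ x ∂(μ.restrict A), Tendsto (fun k => b k x) atTop (𝓝 (c x)) :=
    ae_restrict_of_ae hlim
  have h1 : Tendsto (fun k => ∫⁻ x in A, min (a k x) (c x) ∂μ) atTop (𝓝 (∫⁻ x in A, a' x ∂μ)) := by
    refine tendsto_lintegral_of_dominated_convergence' c (fun k => (ha k).min hc.restrict)
      (fun k => Eventually.of_forall fun x => min_le_right _ _)
      (ne_top_of_le_ne_top hci (setLIntegral_le_lintegral _ _)) ?_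
    filter_upwards [halim, hlimA, ae_restrict_mem hA] with x h1 h2 hx
    have h3 : a' x ≤ c x := le_of_tendsto_of_tendsto h1 h2 (hab.mono fun k hk => hk x hx)
    have := h1.min (tendsto_const_nhds (x := c x))
    rwa [min_eq_left h3] at this
  have h2 := scheffe_sub μ b c hb hc hcf hci hle hlim
  have h3 := h1.add h2
  rw [add_zero] at h3
  have hev : ∀ᶠ k in atTop, ∫⁻ x in A, min (a k x) (c x) ∂μ + ∫⁻ x, (b k x - c x) ∂μ
      ≤ ∫⁻ x in A, a' x ∂μ + ε := by
    by_cases hfin : ∫⁻ x in A, a' x ∂μ = ∞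
    · exact Eventually.of_forall fun k => by rw [hfin]; simp
    · exact (h3.eventually_lt_const (ENNReal.lt_add_right hfin hε)).mono fun k hk => hk.le
  filter_upwards [hev, hab] with k hk hkab
  refine le_trans ?_ hk
  calc ∫⁻ x in A, a k x ∂μ ≤ ∫⁻ x in A, (min (a k x) (c x) + (b k x - c x)) ∂μ := by
        refine setLIntegral_mono' hA fun x hx => ?_
        have := hkab x hx
        rcases le_total (a k x) (c x) with h | h
        · rw [min_eq_left h]; exact le_self_add
        · rw [min_eq_right h]
          exact this.trans le_add_tsub
    _ = ∫⁻ x in A, min (a k x) (c x) ∂μ + ∫⁻ x in A, (b k x - c x) ∂μ :=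
        lintegral_add_left' ((ha k).min hc.restrict) _
    _ ≤ _ := by gcongr; exact Measure.restrict_le_self

/-- Column `j` of a matrix as a vector. -/
def colV (M : M2) (j : Fin 2) : R2 := !₂[M 0 j, M 1 j]

lemma colV_cont (j : Fin 2) : Continuous (fun M : M2 => colV M j) := by
  unfold colV
  fun_prop

lemma colV_norm_sq (M : M2) (j : Fin 2) : ‖colV M j‖ ^ 2 = M 0 j ^ 2 + M 1 j ^ 2 := by
  rw [EuclideanSpace.norm_sq_eq]
  simp [colV, Fin.sum_univ_two]

def hs (L : R2 →L[ℝ] ℝ) (M : M2) : ℝ := Real.sqrt (1 + ∑ j, (L (colV M j)) ^ 2)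

lemma hs_cont : Continuous (fun p : (R2 →L[ℝ] ℝ) × M2 => hs p.1 p.2) := by
  unfold hs
  refine Real.continuous_sqrt.comp (continuous_const.add ?_)
  refine continuous_finsetSum _ fun j _ => ?_
  exact (continuous_fst.clm_apply ((colV_cont j).comp continuous_snd)).pow 2

lemma hs_le (L : R2 →L[ℝ] ℝ) (K : ℝ) (hK : 1 ≤ K) (hL : ‖L‖ ≤ K) (M : M2) :
    hs L M ≤ K * gs M := by
  unfold hs
  rw [Real.sqrt_le_left (mul_nonneg (by linarith) (gs_nonneg M)), mul_pow, gs_sq]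
  have h : ∀ j, (L (colV M j)) ^ 2 ≤ K ^ 2 * (M 0 j ^ 2 + M 1 j ^ 2) := by
    intro j
    rw [← colV_norm_sq, ← mul_pow, ← sq_abs]
    have h1 : |L (colV M j)| ≤ K * ‖colV M j‖ :=
      (L.le_opNorm _).trans (mul_le_mul_of_nonneg_right hL (norm_nonneg _))
    exact pow_le_pow_left₀ (abs_nonneg _) h1 2
  have h0 := h 0
  have h1 := h 1
  simp only [Fin.sum_univ_two]
  nlinarith

/-- The unit circle parametrization. -/
def circ (s : ℝ) : R2 := !₂[Real.cos s, Real.sin s]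

lemma circ_norm (s : ℝ) : ‖circ s‖ = 1 := by
  rw [EuclideanSpace.norm_eq]
  simp [circ, Fin.sum_univ_two]

lemma circ_contDiff : ContDiff ℝ 1 circ := by
  rw [contDiff_euclidean]
  intro i
  fin_cases i
  · exact Real.contDiff_cos
  · exact Real.contDiff_sin

/-- The mollified vector field. -/
def uMol (A : Set R2) (k : ℕ) (u : R2 → R2) (x : R2) : R2 :=
  !₂[mol A k (fun y => u y 0) x, mol A k (fun y => u y 1) x]

lemma uMol_contDiff (A : Set R2) (k : ℕ) (u : R2 → R2) (hu : IntegrableOn u A) :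
    ContDiff ℝ 1 (uMol A k u) := by
  rw [contDiff_euclidean]
  intro i
  fin_cases i
  · exact mol_contDiff A k _ (comp_integrable A u hu 0)
  · exact mol_contDiff A k _ (comp_integrable A u hu 1)

lemma coord_hasFDerivAt (f : R2 → R2) (L : R2 →L[ℝ] R2) (x : R2) (h : HasFDerivAt f L x)
    (i : Fin 2) : HasFDerivAt (fun y => f y i) ((EuclideanSpace.proj (𝕜 := ℝ) i).comp L) x :=
  ContinuousLinearMap.hasFDerivAt (EuclideanSpace.proj (𝕜 := ℝ) (ι := Fin 2) i) |>.comp x h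

lemma uMol_fderiv (A : Set R2) (k : ℕ) (u : R2 → R2) (hu : IntegrableOn u A) (x : R2) (j : Fin 2) :
    fderiv ℝ (uMol A k u) x (EuclideanSpace.single j 1) = colV (dMat A k u x) j := by
  have hd : HasFDerivAt (uMol A k u) (fderiv ℝ (uMol A k u) x) x :=
    ((uMol_contDiff A k u hu).differentiable (by simp) x).hasFDerivAt
  replace hd := coord_hasFDerivAt _ _ _ hd
  ext i
  have h := congrArg (fun T : R2 →L[ℝ] ℝ => T (EuclideanSpace.single j 1)) (hd i).fderiv
  fin_cases i
  · exact h.symm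
  · exact h.symm

lemma jac_circ (θ : R2 → ℝ) (x : R2) (hθ : DifferentiableAt ℝ θ x) (j : Fin 2) :
    jacobianMatrix (fun x => circ (θ x)) x 0 j
        = - Real.sin (θ x) * fderiv ℝ θ x (EuclideanSpace.single j 1) ∧
    jacobianMatrix (fun x => circ (θ x)) x 1 j
        = Real.cos (θ x) * fderiv ℝ θ x (EuclideanSpace.single j 1) := by
  have hd : HasFDerivAt (fun x => circ (θ x)) (fderiv ℝ (fun x => circ (θ x)) x) x :=
    ((circ_contDiff.differentiable (by simp) (θ x)).comp x hθ).hasFDerivAt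
  replace hd := coord_hasFDerivAt _ _ _ hd
  constructor
  · have h := congrArg (fun T : R2 →L[ℝ] ℝ => T (EuclideanSpace.single j 1)) (hd 0).fderiv
    have h2 := congrArg (fun T : R2 →L[ℝ] ℝ => T (EuclideanSpace.single j 1))
      hθ.hasFDerivAt.cos.fderiv
    exact h.symm.trans (h2.trans (by simp))
  · have h := congrArg (fun T : R2 →L[ℝ] ℝ => T (EuclideanSpace.single j 1)) (hd 1).fderiv
    have h2 := congrArg (fun T : R2 →L[ℝ] ℝ => T (EuclideanSpace.single j 1))
      hθ.hasFDerivAt.sin.fderiv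
    exact h.symm.trans (h2.trans (by simp))

lemma area_circ (θ : R2 → ℝ) (x : R2) (hθ : DifferentiableAt ℝ θ x) :
    1 + (∑ i, ∑ j, (jacobianMatrix (fun x => circ (θ x)) x i j) ^ 2)
      + (jacobianMatrix (fun x => circ (θ x)) x).det ^ 2
      = 1 + ∑ j, (fderiv ℝ θ x (EuclideanSpace.single j 1)) ^ 2 := by
  rw [Matrix.det_fin_two]
  simp only [Fin.sum_univ_two]
  rw [(jac_circ θ x hθ 0).1, (jac_circ θ x hθ 0).2, (jac_circ θ x hθ 1).1, (jac_circ θ x hθ 1).2]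
  have := Real.sin_sq_add_cos_sq (θ x)
  linear_combination ((fderiv ℝ θ x (EuclideanSpace.single 0 1)) ^ 2
    + (fderiv ℝ θ x (EuclideanSpace.single 1 1)) ^ 2) * this

lemma area_uMol (A : Set R2) (k : ℕ) (u : R2 → R2) (hu : IntegrableOn u A) (Ψ : R2 → ℝ)
    (hΨ : ContDiff ℝ 1 Ψ) (B : Set R2) :
    classicalArea B (fun x => circ (Ψ (uMol A k u x)))
      = ∫⁻ x in B, ENNReal.ofReal (hs (fderiv ℝ Ψ (uMol A k u x)) (dMat A k u x)) := by
  unfold classicalArea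
  refine lintegral_congr fun x => ?_
  have d1 := hΨ.differentiable (by simp) (uMol A k u x)
  have d2 := (uMol_contDiff A k u hu).differentiable (by simp) x
  rw [area_circ (fun x => Ψ (uMol A k u x)) x (d1.comp x d2)]
  unfold hs
  congr 4
  ext j
  have : fderiv ℝ (fun x => Ψ (uMol A k u x)) x
      = (fderiv ℝ Ψ (uMol A k u x)).comp (fderiv ℝ (uMol A k u) x) := fderiv_comp x d1 d2
  rw [this, ContinuousLinearMap.comp_apply, uMol_fderiv A k u hu]



lemma mol_lintegral_le (A : Set R2) (k : ℕ) (f : R2 → ℝ) (hf : IntegrableOn f A)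
    (h0 : ∀ x, 0 ≤ f x) (B : Set R2) :
    ∫⁻ x in B, ENNReal.ofReal (mol A k f x) ≤ ∫⁻ x in A, ENNReal.ofReal (f x) := by
  refine le_trans (le_of_eq ?_) (young_lintegral A B k f hf.1)
  refine lintegral_congr fun x => ?_
  unfold mol
  rw [ofReal_integral_eq_lintegral_ofReal (mul_kern_integrable A k f hf x)
    (Eventually.of_forall fun t => mul_nonneg (h0 t) (kern_nonneg k _))]
  exact lintegral_congr fun t => ENNReal.ofReal_mul (h0 t)


lemma uMol_lim (Ω : Set R2) (hΩm : MeasurableSet Ω) (u : R2 → R2) (hu : IntegrableOn u Ω)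
    (A : Set R2) (hAΩ : A ⊆ Ω) : ∀ᵐ x ∂(volume.restrict A),
      Tendsto (fun k => uMol Ω k u x) atTop (𝓝 (u x)) := by
  have h0 := mol_ae Ω hΩm _ (comp_integrable Ω u hu 0)
  have h1 := mol_ae Ω hΩm _ (comp_integrable Ω u hu 1)
  refine ae_restrict_of_ae_restrict_of_subset hAΩ ?_
  filter_upwards [h0, h1] with x a0 a1
  have h3 : Tendsto (fun k => ![mol Ω k (fun y => u y 0) x, mol Ω k (fun y => u y 1) x]) atTop
      (𝓝 (u x).ofLp) := by
    refine tendsto_pi_nhds.2 fun i => ?_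
    fin_cases i
    · exact a0
    · exact a1
  exact ((PiLp.continuous_toLp 2 (fun _ : Fin 2 => ℝ)).tendsto _).comp h3

lemma dMat_lim (Ω : Set R2) (hΩm : MeasurableSet Ω) (u : R2 → R2) (G : R2 → M2)
    (h : MemW11 Ω u G) (n : ℕ) (A : Set R2) (hA : MeasurableSet A) (hAn : A ⊆ inn Ω n) :
    ∀ᵐ x ∂(volume.restrict A), Tendsto (fun k => dMat Ω k u x) atTop (𝓝 (G x)) := by
  have hAΩ : A ⊆ Ω := hAn.trans (inn_subset Ω n)
  have h0 : ∀ᵐ x ∂(volume.restrict Ω), ∀ i j,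
      Tendsto (fun k => mol Ω k (fun y => G y i j) x) atTop (𝓝 (G x i j)) := by
    rw [ae_all_iff]; intro i
    rw [ae_all_iff]; intro j
    exact mol_ae Ω hΩm _ (h.2.1 i j)
  filter_upwards [ae_restrict_of_ae_restrict_of_subset hAΩ h0, ae_restrict_mem hA] with x hx hxA
  have h1 : Tendsto (fun k => molMat Ω k G x) atTop (𝓝 (G x)) :=
    tendsto_pi_nhds.2 fun i => tendsto_pi_nhds.2 fun j => hx i j
  refine h1.congr' ?_
  filter_upwards [eventually_ge_atTop n] with k hk
  exact (dMat_eq Ω hΩm k u G h x (inn_ball Ω n k hk x (hAn hxA))).symm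

lemma circ_lim (Ω : Set R2) (hΩm : MeasurableSet Ω) (hvol : volume Ω ≠ ∞) (u : R2 → R2)
    (hu : IntegrableOn u Ω) (A : Set R2) (hAΩ : A ⊆ Ω) (Ψ : R2 → ℝ) (hΨ : ContDiff ℝ 1 Ψ) :
    Tendsto (fun k => ∫ x in A, ‖circ (Ψ (uMol Ω k u x)) - circ (Ψ (u x))‖) atTop (𝓝 0) := by
  have hlimu := uMol_lim Ω hΩm u hu A hAΩ
  have hv : ∀ k, ContDiff ℝ 1 (fun x => circ (Ψ (uMol Ω k u x))) := fun k =>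
    circ_contDiff.comp (hΨ.comp (uMol_contDiff Ω k u hu))
  have hfin : IsFiniteMeasure (volume.restrict A) :=
    ⟨by rw [Measure.restrict_apply_univ]; exact (measure_mono hAΩ).trans_lt hvol.lt_top⟩
  have hL : Tendsto (fun k => ∫ x in A, ‖circ (Ψ (uMol Ω k u x)) - circ (Ψ (u x))‖) atTop
      (𝓝 (∫ x in A, (0 : ℝ))) := by
    have hm : AEStronglyMeasurable (fun x => circ (Ψ (u x))) (volume.restrict A) :=
      (circ_contDiff.continuous.comp hΨ.continuous).comp_aestronglyMeasurable
        (hu.mono_set hAΩ).1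
    refine tendsto_integral_of_dominated_convergence (fun _ => 2)
      (fun k => ((hv k).continuous.aestronglyMeasurable.sub hm).norm) (integrable_const _) ?_ ?_
    · intro k
      refine Eventually.of_forall fun x => ?_
      rw [norm_norm]
      refine (norm_sub_le _ _).trans ?_
      rw [circ_norm, circ_norm]; norm_num
    · filter_upwards [hlimu] with x hx
      have := ((circ_contDiff.continuous.comp hΨ.continuous).tendsto (u x)).comp hx
      have h2 := (this.sub_const (circ (Ψ (u x)))).norm
      simpa using h2
  rw [integral_zero] at hL
  exact hL

lemma hs_tendsto (L : ℕ → R2 →L[ℝ] ℝ) (M : ℕ → M2) (L' : R2 →L[ℝ] ℝ) (M' : M2)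
    (hL : Tendsto L atTop (𝓝 L')) (hM : Tendsto M atTop (𝓝 M')) :
    Tendsto (fun k => hs (L k) (M k)) atTop (𝓝 (hs L' M')) := by
  have h3 : Tendsto (fun k => (L k, M k)) atTop (𝓝 (L', M')) := hL.prodMk_nhds hM
  have h4 := hs_cont.tendsto (L', M')
  have h5 := h4.comp h3
  refine h5.congr fun k => ?_
  rfl

theorem approx_one (Ω : Set R2) (hΩ : IsOpen Ω) (hvol : volume Ω ≠ ∞) (u : R2 → R2) (G : R2 → M2)
    (h : MemW11 Ω u G) (n : ℕ) (A : Set R2) (hA : MeasurableSet A) (hAn : A ⊆ inn Ω n)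
    (Ψ : R2 → ℝ) (hΨ : ContDiff ℝ 1 Ψ) (K : ℝ) (hK : 1 ≤ K) (hΨK : ∀ y, ‖fderiv ℝ Ψ y‖ ≤ K)
    (ε : ℝ) (hε : 0 < ε) :
    ∃ v : R2 → R2, ContDiff ℝ 1 v ∧ (∀ x, ‖v x‖ = 1) ∧
      ∫ x in A, ‖v x - circ (Ψ (u x))‖ ≤ ε ∧
      classicalArea A v ≤ (∫⁻ x in A, ENNReal.ofReal (hs (fderiv ℝ Ψ (u x)) (G x)))
        + ENNReal.ofReal ε := by
  have hAΩ : A ⊆ Ω := hAn.trans (inn_subset Ω n)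
  have hΩm := hΩ.measurableSet
  have hgs := gs_integrable Ω hvol G h.2.1
  have hu := h.1
  have hlimu := uMol_lim Ω hΩm u hu A hAΩ
  have hlimG := dMat_lim Ω hΩm u G h n A hA hAn
  have hcf : Continuous (fderiv ℝ Ψ) := hΨ.continuous_fderiv (by simp)
  have hv : ∀ k, ContDiff ℝ 1 (fun x => circ (Ψ (uMol Ω k u x))) := fun k =>
    circ_contDiff.comp (hΨ.comp (uMol_contDiff Ω k u hu))
  have hL := circ_lim Ω hΩm hvol u hu A hAΩ Ψ hΨ
  have p1 : ∀ k, AEMeasurable (fun x => ENNReal.ofReal (hs (fderiv ℝ Ψ (uMol Ω k u x)) (dMat Ω k u x)))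
      ((volume.restrict Ω).restrict A) := fun k => by
    have : Continuous (fun x => hs (fderiv ℝ Ψ (uMol Ω k u x)) (dMat Ω k u x)) :=
      hs_cont.comp ((hcf.comp (uMol_contDiff Ω k u hu).continuous).prodMk (dMat_cont Ω k u hu))
    exact this.measurable.ennreal_ofReal.aemeasurable
  have p2 : ∀ k, AEMeasurable
      (fun x => ENNReal.ofReal K * ENNReal.ofReal (mol Ω k (fun y => gs (G y)) x))
      (volume.restrict Ω) := fun k =>
    ((mol_contDiff Ω k _ hgs).continuous.measurable.ennreal_ofReal.const_mul _).aemeasurable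
  have p3 : AEMeasurable (fun x => ENNReal.ofReal K * ENNReal.ofReal (gs (G x)))
      (volume.restrict Ω) := hgs.1.aemeasurable.ennreal_ofReal.const_mul _
  have p4 : ∀ x, ENNReal.ofReal K * ENNReal.ofReal (gs (G x)) ≠ ∞ := fun x =>
    ENNReal.mul_ne_top ENNReal.ofReal_ne_top ENNReal.ofReal_ne_top
  have p5 : ∫⁻ x in Ω, ENNReal.ofReal K * ENNReal.ofReal (gs (G x)) ≠ ∞ := by
    rw [lintegral_const_mul' _ _ ENNReal.ofReal_ne_top]
    exact ENNReal.mul_ne_top ENNReal.ofReal_ne_top hgs.lintegral_lt_top.ne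
  have p6 : ∀ k, ∫⁻ x in Ω, ENNReal.ofReal K * ENNReal.ofReal (mol Ω k (fun y => gs (G y)) x)
      ≤ ∫⁻ x in Ω, ENNReal.ofReal K * ENNReal.ofReal (gs (G x)) := fun k => by
    rw [lintegral_const_mul' _ _ ENNReal.ofReal_ne_top,
      lintegral_const_mul' _ _ ENNReal.ofReal_ne_top]
    exact mul_le_mul_right (mol_lintegral_le Ω k _ hgs (fun x => gs_nonneg _) Ω) _
  have p7 : ∀ᵐ x ∂(volume.restrict Ω), Tendsto
      (fun k => ENNReal.ofReal K * ENNReal.ofReal (mol Ω k (fun y => gs (G y)) x)) atTop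
      (𝓝 (ENNReal.ofReal K * ENNReal.ofReal (gs (G x)))) := by
    filter_upwards [mol_ae Ω hΩm _ hgs] with x hx
    exact ENNReal.Tendsto.const_mul (ENNReal.tendsto_ofReal hx)
      (Or.inr ENNReal.ofReal_ne_top)
  have p8 : ∀ᶠ k in atTop, ∀ x ∈ A,
      ENNReal.ofReal (hs (fderiv ℝ Ψ (uMol Ω k u x)) (dMat Ω k u x)) ≤
        ENNReal.ofReal K * ENNReal.ofReal (mol Ω k (fun y => gs (G y)) x) := by
    filter_upwards [eventually_ge_atTop n] with k hk x hx
    have hball := inn_ball Ω n k hk x (hAn hx)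
    rw [← ENNReal.ofReal_mul (by linarith), dMat_eq Ω hΩm k u G h x hball]
    refine ENNReal.ofReal_le_ofReal ((hs_le _ K hK (hΨK _) _).trans ?_)
    exact mul_le_mul_of_nonneg_left (jensen_pt Ω hvol k G h.2.1 x hball) (by linarith)
  have p9 : ∀ᵐ x ∂((volume.restrict Ω).restrict A), Tendsto
      (fun k => ENNReal.ofReal (hs (fderiv ℝ Ψ (uMol Ω k u x)) (dMat Ω k u x))) atTop
      (𝓝 (ENNReal.ofReal (hs (fderiv ℝ Ψ (u x)) (G x)))) := by
    rw [Measure.restrict_restrict hA, inter_eq_left.2 hAΩ]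
    filter_upwards [hlimu, hlimG] with x h1 h2
    exact ENNReal.tendsto_ofReal (hs_tendsto _ _ _ _ ((hcf.tendsto (u x)).comp h1) h2)
  have hP := pratt (volume.restrict Ω) A hA _ _ _ _ p1 p2 p3 p4 p5 p6 p7 p8 p9
    (ENNReal.ofReal ε) (by simpa using hε)
  rw [Measure.restrict_restrict hA, inter_eq_left.2 hAΩ] at hP
  obtain ⟨k, hk1, hk2⟩ := (hP.and (hL.eventually_lt_const hε)).exists
  refine ⟨fun x => circ (Ψ (uMol Ω k u x)), hv k, fun x => circ_norm _, hk2.le, ?_⟩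
  rw [area_uMol Ω k u hu Ψ hΨ A]
  exact hk1



/-- The bad set for the `j`-th cut. -/
def badS (u : R2 → R2) (A : Set R2) (m : ℕ) (j : ℕ) : Set R2 :=
  A ∩ {x | u x 0 < 0 ∧ |u x 1 + (j : ℝ) / (2 * m)| ≤ 2 * (1 / (16 * (m : ℝ)))}

lemma comp_meas (u : R2 → R2) (hu : Measurable u) (i : Fin 2) : Measurable (fun x => u x i) :=
  (EuclideanSpace.proj (𝕜 := ℝ) (ι := Fin 2) i).continuous.measurable.comp hu

lemma badS_meas (u : R2 → R2) (hu : Measurable u) (A : Set R2) (hA : MeasurableSet A) (m j : ℕ) :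
    MeasurableSet (badS u A m j) := by
  refine hA.inter (MeasurableSet.inter ?_ ?_)
  · exact measurableSet_lt (comp_meas u hu 0) measurable_const
  · have h1 : Measurable (fun x => u x 1 + (j : ℝ) / (2 * m)) :=
      (comp_meas u hu 1).add measurable_const
    exact measurableSet_le (measurable_norm.comp h1) measurable_const

lemma badS_disj (u : R2 → R2) (A : Set R2) (m : ℕ) (hm : 1 ≤ m) (i j : ℕ) (hij : i < j) :
    Disjoint (badS u A m i) (badS u A m j) := by
  rw [Set.disjoint_left]
  rintro x ⟨_, _, h1⟩ ⟨_, _, h2⟩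
  have hm' : (1 : ℝ) ≤ m := by exact_mod_cast hm
  have hp : (0 : ℝ) < 1 / (16 * (m : ℝ)) := by positivity
  have e : ∀ l : ℕ, (l : ℝ) / (2 * m) = l * (8 * (1 / (16 * (m : ℝ)))) := by
    intro l; field_simp; ring
  rw [e] at h1 h2
  rw [abs_le] at h1 h2
  have h3 : (i : ℝ) + 1 ≤ j := by exact_mod_cast hij
  nlinarith

lemma pigeon (u : R2 → R2) (hu : Measurable u) (A : Set R2) (hA : MeasurableSet A) (m : ℕ)
    (hm : 1 ≤ m) (g : R2 → ℝ≥0∞) :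
    ∃ j < m, ∫⁻ x in badS u A m j, g x ≤ (∫⁻ x in A ∩ {x | u x 0 < 0}, g x) / m := by
  have hne : (Finset.range m).Nonempty := Finset.nonempty_range_iff.2 (by omega)
  have hsum : ∑ j ∈ Finset.range m, ∫⁻ x in badS u A m j, g x
      ≤ ∑ j ∈ Finset.range m, (∫⁻ x in A ∩ {x | u x 0 < 0}, g x) / m := by
    rw [← lintegral_biUnion_finset]
    · rw [Finset.sum_const, Finset.card_range, nsmul_eq_mul,
        ENNReal.mul_div_cancel (by simp; omega) (by simp)]
      refine lintegral_mono_set ?_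
      refine iUnion₂_subset fun j _ => ?_
      exact inter_subset_inter_right _ fun x hx => hx.1
    · intro i _ j _ hij
      rcases lt_or_gt_of_ne hij with h | h
      · exact badS_disj u A m hm i j h
      · exact (badS_disj u A m hm j i h).symm
    · exact fun j _ => badS_meas u hu A hA m j
  obtain ⟨j, hj, hle⟩ := ENNReal.exists_le_of_sum_le hne hsum
  exact ⟨j, Finset.mem_range.1 hj, hle⟩

theorem upper_step (C : ℝ) (hC0 : 0 ≤ C)
    (hC : ∀ δ, 0 < δ → δ ≤ 1 / 8 → ∀ t : ℝ, 0 ≤ t → t ≤ 1 / 2 →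
    ∃ Ψ : R2 → ℝ, ContDiff ℝ 1 Ψ ∧ (∀ y, ‖fderiv ℝ Ψ y‖ ≤ C / δ) ∧
    ∀ y : R2, ‖y‖ = 1 → ¬ (y 0 < 0 ∧ |y 1 + t| ≤ 2 * δ) →
      Real.cos (Ψ y) = y 0 ∧ Real.sin (Ψ y) = y 1 ∧ ‖fderiv ℝ Ψ y‖ ≤ 1)
    (Ω : Set R2) (hΩ : IsOpen Ω) (hvol : volume Ω ≠ ∞) (u : R2 → R2) (G : R2 → M2)
    (h : MemW11 Ω u G) (hS : SphereValued Ω u) (hu : Measurable u)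
    (n : ℕ) (A : Set R2) (hA : IsOpen A) (hAn : A ⊆ inn Ω n) (m : ℕ) (hm : 1 ≤ m) :
    ∃ v : R2 → R2, ContDiff ℝ 1 v ∧ (∀ x, ‖v x‖ = 1) ∧
      ∫ x in A, ‖v x - u x‖ ≤ 1 / (m : ℝ)
        + 2 * ((∫⁻ x in Ω, ENNReal.ofReal (gs (G x))).toReal / m) ∧
      classicalArea A v ≤ (∫⁻ x in A, ENNReal.ofReal (gs (G x)))
        + ENNReal.ofReal (16 * C + 1) * (∫⁻ x in A ∩ {x | u x 0 < 0}, ENNReal.ofReal (gs (G x)))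
        + ENNReal.ofReal (1 / (m : ℝ)) := by
  have hAΩ : A ⊆ Ω := hAn.trans (inn_subset Ω n)
  have hgs := gs_integrable Ω hvol G h.2.1
  have hT : ∫⁻ x in Ω, ENNReal.ofReal (gs (G x)) ≠ ∞ := hgs.lintegral_lt_top.ne
  have hm' : (1 : ℝ) ≤ m := by exact_mod_cast hm
  obtain ⟨j, hj, hle⟩ := pigeon u hu A hA.measurableSet m hm (fun x => ENNReal.ofReal (gs (G x)))
  set B := badS u A m j with hB
  have hBm : MeasurableSet B := badS_meas u hu A hA.measurableSet m j
  have hBA : B ⊆ A := inter_subset_left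
  obtain ⟨Ψ, hΨ, hΨK, hΨ1⟩ := hC (1 / (16 * (m : ℝ))) (by positivity)
    (by apply one_div_le_one_div_of_le <;> linarith) ((j : ℝ) / (2 * m)) (by positivity) (by
      rw [div_le_div_iff₀ (by positivity) (by norm_num)]
      have : (j : ℝ) ≤ m := by exact_mod_cast hj.le
      linarith)
  set K : ℝ := 16 * C * m + 1 with hKd
  have hK1 : 1 ≤ K := by rw [hKd]; nlinarith [mul_nonneg hC0 (by linarith : (0:ℝ) ≤ m)]
  have hKK : ∀ y, ‖fderiv ℝ Ψ y‖ ≤ K := fun y => (hΨK y).trans (by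
    rw [hKd, div_div_eq_mul_div, div_one]; linarith)
  obtain ⟨v, hv, hv1, hvL, hvA⟩ := approx_one Ω hΩ hvol u G h n A hA.measurableSet hAn Ψ hΨ K hK1
    hKK (1 / (m : ℝ)) (by positivity)
  have hSA : ∀ᵐ x ∂(volume.restrict A), ‖u x‖ = 1 := ae_restrict_of_ae_restrict_of_subset hAΩ hS
  have hgood : ∀ x ∈ A, x ∉ B → ‖u x‖ = 1 → circ (Ψ (u x)) = u x ∧ ‖fderiv ℝ Ψ (u x)‖ ≤ 1 := by
    intro x hxA hxB hx1
    obtain ⟨c1, c2, c3⟩ := hΨ1 (u x) hx1 (fun hb => hxB ⟨hxA, hb⟩)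
    refine ⟨?_, c3⟩
    ext i
    fin_cases i
    · exact c1
    · exact c2
  have hfinA : IsFiniteMeasure (volume.restrict A) :=
    ⟨by rw [Measure.restrict_apply_univ]; exact (measure_mono hAΩ).trans_lt hvol.lt_top⟩
  have hBv : (volume B).toReal ≤ (∫⁻ x in Ω, ENNReal.ofReal (gs (G x))).toReal / m := by
    have h1 : volume B ≤ (∫⁻ x in Ω, ENNReal.ofReal (gs (G x))) / m := by
      calc volume B = ∫⁻ x in B, 1 := by simp
        _ ≤ ∫⁻ x in B, ENNReal.ofReal (gs (G x)) := lintegral_mono fun x => by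
            rw [← ENNReal.ofReal_one]; exact ENNReal.ofReal_le_ofReal (gs_ge_one _)
        _ ≤ _ := hle
        _ ≤ _ := by
            gcongr
            exact inter_subset_left.trans hAΩ
    have h2 := ENNReal.toReal_mono (ENNReal.div_ne_top hT (by simp; omega)) h1
    rwa [ENNReal.toReal_div, ENNReal.toReal_natCast] at h2
  refine ⟨v, hv, hv1, ?_, ?_⟩
  · have hWm : AEStronglyMeasurable (fun x => circ (Ψ (u x))) (volume.restrict A) :=
      (circ_contDiff.continuous.comp hΨ.continuous).comp_aestronglyMeasurable
        (h.1.mono_set hAΩ).1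
    have i1 : IntegrableOn (fun x => ‖v x - circ (Ψ (u x))‖) A := by
      refine Integrable.norm ?_
      refine Integrable.of_bound (hv.continuous.aestronglyMeasurable.sub hWm) 2
        (Eventually.of_forall fun x => ?_)
      refine (norm_sub_le _ _).trans ?_
      rw [hv1, circ_norm]; norm_num
    have i2 : IntegrableOn (fun x => B.indicator (fun _ => (2 : ℝ)) x) A :=
      (integrable_const (2 : ℝ)).indicator hBm
    have hle2 : ∫ x in A, ‖v x - u x‖ ≤ ∫ x in A, (‖v x - circ (Ψ (u x))‖
        + B.indicator (fun _ => (2 : ℝ)) x) := by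
      refine integral_mono_of_nonneg (Eventually.of_forall fun x => norm_nonneg _) (i1.add i2) ?_
      filter_upwards [hSA, ae_restrict_mem hA.measurableSet] with x hx1 hxA
      by_cases hxB : x ∈ B
      · rw [indicator_of_mem hxB]
        have : ‖v x - u x‖ ≤ 2 := (norm_sub_le _ _).trans (by rw [hv1, hx1]; norm_num)
        linarith [norm_nonneg (v x - circ (Ψ (u x)))]
      · rw [indicator_of_notMem hxB, (hgood x hxA hxB hx1).1]; simp
    refine hle2.trans ?_
    rw [integral_add i1 i2, integral_indicator hBm, Measure.restrict_restrict hBm,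
      inter_eq_left.2 hBA, setIntegral_const, smul_eq_mul, mul_comm]
    exact add_le_add hvL (mul_le_mul_of_nonneg_left hBv (by norm_num))
  · refine hvA.trans ?_
    gcongr
    calc ∫⁻ x in A, ENNReal.ofReal (hs (fderiv ℝ Ψ (u x)) (G x))
        ≤ ∫⁻ x in A, (ENNReal.ofReal (gs (G x))
          + B.indicator (fun x => ENNReal.ofReal K * ENNReal.ofReal (gs (G x))) x) := by
          refine lintegral_mono_ae ?_
          filter_upwards [hSA, ae_restrict_mem hA.measurableSet] with x hx1 hxA
          by_cases hxB : x ∈ B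
          · rw [indicator_of_mem hxB, ← ENNReal.ofReal_mul (by linarith)]
            exact (ENNReal.ofReal_le_ofReal (hs_le _ K hK1 (hKK _) _)).trans le_add_self
          · rw [indicator_of_notMem hxB, add_zero]
            refine ENNReal.ofReal_le_ofReal ((hs_le _ 1 le_rfl (hgood x hxA hxB hx1).2 _).trans ?_)
            rw [one_mul]
      _ = (∫⁻ x in A, ENNReal.ofReal (gs (G x)))
          + ENNReal.ofReal K * ∫⁻ x in B, ENNReal.ofReal (gs (G x)) := by
          rw [lintegral_add_left' (hgs.mono_set hAΩ).1.aemeasurable.ennreal_ofReal,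
            lintegral_indicator hBm, Measure.restrict_restrict hBm,
            inter_eq_left.2 hBA, lintegral_const_mul' _ _ ENNReal.ofReal_ne_top]
      _ ≤ _ := by
          refine add_le_add le_rfl ?_
          calc _ ≤ ENNReal.ofReal ((16 * C + 1) * m)
                * ((∫⁻ x in A ∩ {x | u x 0 < 0}, ENNReal.ofReal (gs (G x))) / m) := by
                refine mul_le_mul' (ENNReal.ofReal_le_ofReal ?_) hle
                rw [hKd]; nlinarith
            _ = _ := by
                rw [ENNReal.ofReal_mul (by positivity), ENNReal.ofReal_natCast, mul_assoc,
                  ENNReal.mul_div_cancel (by simp; omega) (by simp)]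

theorem upper_key : ∃ C : ℝ, 0 ≤ C ∧ ∀ (Ω : Set R2), IsOpen Ω → volume Ω ≠ ∞ →
    ∀ (u : R2 → R2) (G : R2 → M2), MemW11 Ω u G → SphereValued Ω u → Measurable u →
    ∀ (n : ℕ) (A : Set R2), IsOpen A → A ⊆ inn Ω n →
    relaxedArea u A ≤ (∫⁻ x in A, ENNReal.ofReal (gs (G x)))
        + ENNReal.ofReal C * (∫⁻ x in A ∩ {x | u x 0 < 0}, ENNReal.ofReal (gs (G x))) := by
  obtain ⟨C, hC0, hC⟩ := Psi_exists
  refine ⟨16 * C + 1, by positivity, ?_⟩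
  intro Ω hΩ hvol u G h hS hu n A hA hAn
  have hAΩ : A ⊆ Ω := hAn.trans (inn_subset Ω n)
  have hfinA : IsFiniteMeasure (volume.restrict A) :=
    ⟨by rw [Measure.restrict_apply_univ]; exact (measure_mono hAΩ).trans_lt hvol.lt_top⟩
  have hst := fun m : ℕ => upper_step C hC0 hC Ω hΩ hvol u G h hS hu n A hA hAn (m + 1)
    (Nat.le_add_left _ _)
  choose v hv hv1 hvL hvA using hst
  have ht : Tendsto (fun m : ℕ => 1 / (((m + 1 : ℕ) : ℝ))) atTop (𝓝 0) := by
    simpa using tendsto_one_div_add_atTop_nhds_zero_nat (𝕜 := ℝ)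
  have hmem : relaxedArea u A ≤ liminf (fun k => classicalArea A (v k)) atTop := by
    refine sInf_le ⟨v, fun k => (hv k).contDiffOn, fun k => ?_, ?_, rfl⟩
    · refine Integrable.sub ?_ (h.1.mono_set hAΩ)
      exact Integrable.of_bound (hv k).continuous.aestronglyMeasurable 1
          (Eventually.of_forall fun x => (hv1 k x).le)
    · refine tendsto_of_tendsto_of_tendsto_of_le_of_le tendsto_const_nhds ?_
        (fun k => integral_nonneg fun x => norm_nonneg _) hvL
      have h2 := ht.add ((ht.const_mul (∫⁻ x in Ω, ENNReal.ofReal (gs (G x))).toReal).const_mul 2)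
      simpa [div_eq_mul_inv] using h2
  · refine hmem.trans ?_
    refine (liminf_le_liminf (Eventually.of_forall hvA)).trans (le_of_eq ?_)
    refine Tendsto.liminf_eq ?_
    have h3 := (ENNReal.tendsto_ofReal ht).const_add ((∫⁻ x in A, ENNReal.ofReal (gs (G x)))
        + ENNReal.ofReal (16 * C + 1) * (∫⁻ x in A ∩ {x | u x 0 < 0}, ENNReal.ofReal (gs (G x))))
    rw [ENNReal.ofReal_zero, add_zero] at h3
    exact h3



lemma relaxedArea_le_congr (u w : R2 → R2) (A : Set R2) (h : ∀ᵐ x ∂(volume.restrict A), u x = w x) :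
    relaxedArea u A ≤ relaxedArea w A := by
  refine le_sInf ?_
  rintro a ⟨v, hv, hvi, hvl, rfl⟩
  refine sInf_le ⟨v, hv, fun k => (hvi k).congr ?_, hvl.congr fun k => ?_, rfl⟩
  · filter_upwards [h] with x hx
    rw [hx]
  · refine integral_congr_ae ?_
    filter_upwards [h] with x hx
    rw [hx]

lemma jac_neg (v : R2 → R2) (x : R2) : jacobianMatrix (fun x => - v x) x = - jacobianMatrix v x := by
  ext i j
  simp only [jacobianMatrix, Matrix.of_apply, Matrix.neg_apply]
  have : fderiv ℝ (fun x => - v x) x = - fderiv ℝ v x := fderiv_neg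
  rw [this]
  simp

lemma area_neg (A : Set R2) (v : R2 → R2) : classicalArea A (fun x => - v x) = classicalArea A v := by
  unfold classicalArea
  refine lintegral_congr fun x => ?_
  rw [jac_neg]
  simp [Matrix.det_neg]

lemma relaxedArea_neg (u : R2 → R2) (A : Set R2) :
    relaxedArea u A ≤ relaxedArea (fun x => - u x) A := by
  refine le_sInf ?_
  rintro a ⟨v, hv, hvi, hvl, rfl⟩
  refine sInf_le ⟨fun k x => - v k x, fun k => (hv k).neg, fun k => ?_, ?_, ?_⟩
  · refine (hvi k).neg.congr (Eventually.of_forall fun x => ?_)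
    simp only [Pi.neg_apply]
    abel
  · refine hvl.congr fun k => ?_
    refine integral_congr_ae (Eventually.of_forall fun x => ?_)
    show ‖v k x - - u x‖ = ‖- v k x - u x‖
    rw [← norm_neg]
    congr 1
    abel
  · simp only [area_neg]

lemma memW11_neg (Ω : Set R2) (u : R2 → R2) (G : R2 → M2) (h : MemW11 Ω u G) :
    MemW11 Ω (fun x => - u x) (fun x => - G x) := by
  obtain ⟨h1, h2, h3⟩ := h
  refine ⟨h1.neg, fun i j => (h2 i j).neg, ?_⟩
  intro φ hφ hc hs i j
  have := h3 φ hφ hc hs i j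
  simp only [PiLp.neg_apply, Matrix.neg_apply, neg_mul, integral_neg]
  rw [this]

lemma memW11_congr (Ω : Set R2) (u w : R2 → R2) (G : R2 → M2) (h : MemW11 Ω u G)
    (he : ∀ᵐ x ∂(volume.restrict Ω), u x = w x) : MemW11 Ω w G := by
  obtain ⟨h1, h2, h3⟩ := h
  refine ⟨h1.congr he, h2, ?_⟩
  intro φ hφ hc hs i j
  rw [← h3 φ hφ hc hs i j]
  refine integral_congr_ae ?_
  filter_upwards [he] with x hx
  rw [hx]

lemma gs_neg (M : M2) : gs (-M) = gs M := by simp [gs]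

lemma cover_one (Ω : Set R2) (n : ℕ) (u : R2 → R2) (ν : Measure R2) [IsFiniteMeasure ν] (C : ℝ≥0∞)
    (S : Set R2) 
    (hR : ∀ A, IsOpen A → A ⊆ inn Ω n → relaxedArea u A ≤ ν A + C * ν (A ∩ Sᶜ))
    (E : Set R2) (hEm : MeasurableSet E) (hE : E ⊆ inn Ω n) (hES : E ⊆ S) (η : ℝ≥0∞) (hη : 0 < η) :
    ∃ A, IsOpen A ∧ A ⊆ Ω ∧ E ⊆ A ∧ relaxedArea u A ≤ ν E + (1 + C) * η := by
  obtain ⟨A, hEA, hA, hlt⟩ := E.exists_isOpen_lt_add (μ := ν) (measure_ne_top ν E) hη.ne'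
  have hA2 : ν (A ∩ inn Ω n) ≤ ν E + η := (measure_mono inter_subset_left).trans hlt.le
  refine ⟨A ∩ inn Ω n, hA.inter (inn_open Ω n), inter_subset_right.trans (inn_subset Ω n),
    subset_inter hEA hE, ?_⟩
  refine (hR _ (hA.inter (inn_open Ω n)) inter_subset_right).trans ?_
  have h1 : ν (A ∩ inn Ω n ∩ Sᶜ) ≤ η := by
    calc _ ≤ ν ((A ∩ inn Ω n) \ E) := measure_mono fun x hx => ⟨hx.1, fun h => hx.2 (hES h)⟩
      _ = ν (A ∩ inn Ω n) - ν E := measure_sdiff (subset_inter hEA hE) hEm.nullMeasurableSet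
          (measure_ne_top ν E)
      _ ≤ η := tsub_le_iff_left.2 hA2
  calc _ ≤ (ν E + η) + C * η := add_le_add hA2 (mul_le_mul_right h1 C)
    _ = _ := by ring

lemma cover_all (Ω U : Set R2) (hU : IsOpen U) (hUΩ : U ⊆ Ω) (u : R2 → R2) (ν : Measure R2)
    [IsFiniteMeasure ν] (C : ℝ≥0∞) (hC : C ≠ ∞) (S : Bool → Set R2) (hSm : ∀ b, MeasurableSet (S b))
    (hSd : Disjoint (S true) (S false)) (hSu : S true ∪ S false = univ)
    (hR : ∀ b n A, IsOpen A → A ⊆ inn Ω n → relaxedArea u A ≤ ν A + C * ν (A ∩ (S b)ᶜ)) :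
    envA u Ω U ≤ ν U := by
  have hC1 : 1 + C ≠ 0 := by simp
  have hC2 : 1 + C ≠ ∞ := by simp [hC]
  refine ENNReal.le_of_forall_pos_le_add fun δ hδ _ => ?_
  have hδ' : (δ : ℝ≥0∞) / (1 + C) ≠ 0 := by
    rw [ENNReal.div_ne_zero]
    exact ⟨by exact_mod_cast hδ.ne', hC2⟩
  obtain ⟨η, hη, hηs⟩ := ENNReal.exists_pos_sum_of_countable' hδ' (ℕ × Bool)
  let E : ℕ × Bool → Set R2 := fun p => disjointed (inn U) p.1 ∩ S p.2
  have hEm : ∀ p, MeasurableSet (E p) := fun p =>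
    (MeasurableSet.disjointed (fun n => (inn_open U n).measurableSet) p.1).inter (hSm p.2)
  have hcov := fun p : ℕ × Bool => cover_one Ω p.1 u ν C (S p.2) (hR p.2 p.1) (E p) (hEm p)
    ((inter_subset_left.trans (disjointed_subset _ _)).trans (inn_mono_set U Ω hUΩ p.1))
    inter_subset_right (η p) (hη p)
  choose A hA hAΩ hEA hAle using hcov
  have hEU : ⋃ p, E p = U := by
    apply Subset.antisymm
    · exact iUnion_subset fun p => (inter_subset_left.trans (disjointed_subset _ _)).trans
        (inn_subset U p.1)
    · intro x hx
      rw [← inn_iUnion U hU, ← iUnion_disjointed] at hx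
      obtain ⟨n, hn⟩ := mem_iUnion.1 hx
      have : x ∈ S true ∪ S false := by rw [hSu]; trivial
      rcases this with h | h
      · exact mem_iUnion.2 ⟨(n, true), hn, h⟩
      · exact mem_iUnion.2 ⟨(n, false), hn, h⟩
  have hEd : Pairwise (Function.onFun Disjoint E) := by
    rintro ⟨n, b⟩ ⟨n', b'⟩ hne
    by_cases hn : n = n'
    · subst hn
      have hb : b ≠ b' := fun h => hne (by rw [h])
      refine Disjoint.mono inter_subset_right inter_subset_right ?_
      cases b <;> cases b' <;> first | exact absurd rfl hb | exact hSd | exact hSd.symm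
    · exact Disjoint.mono inter_subset_left inter_subset_left (disjoint_disjointed _ hn)
  obtain ⟨e⟩ : Nonempty (ℕ × Bool ≃ ℕ) := nonempty_equiv_of_countable
  have hmem : envA u Ω U ≤ ∑' k, relaxedArea u (A (e.symm k)) := by
    refine sInf_le ⟨fun k => A (e.symm k),
      fun k => ⟨hA _, hAΩ _⟩, ?_, rfl⟩
    rw [← hEU]
    refine iUnion_subset fun p => (hEA p).trans ?_
    refine subset_iUnion_of_subset (e p) ?_
    rw [Equiv.symm_apply_apply]
  refine hmem.trans ?_
  rw [Equiv.tsum_eq e.symm (fun p => relaxedArea u (A p))]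
  calc ∑' p, relaxedArea u (A p) ≤ ∑' p, (ν (E p) + (1 + C) * η p) := ENNReal.tsum_le_tsum hAle
    _ = ν U + (1 + C) * ∑' p, η p := by
        rw [ENNReal.tsum_add, ENNReal.tsum_mul_left, ← measure_iUnion hEd hEm, hEU]
    _ ≤ ν U + (1 + C) * (δ / (1 + C)) := by gcongr
    _ = ν U + δ := by rw [ENNReal.mul_div_cancel hC1 hC2]

theorem upper_final (Ω : Set R2) (hΩ : IsOpen Ω) (hvol : volume Ω ≠ ∞) (u : R2 → R2) (G : R2 → M2)
    (h : MemW11 Ω u G) (hS : SphereValued Ω u) (U : Set R2) (hU : IsOpen U) (hUΩ : U ⊆ Ω) :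
    envA u Ω U ≤ ∫⁻ x in U, ENNReal.ofReal (gs (G x)) := by
  obtain ⟨C, hC0, hC⟩ := upper_key
  -- a measurable representative
  obtain ⟨w, hwm, hwu⟩ : ∃ w : R2 → R2, Measurable w ∧ ∀ᵐ x ∂(volume.restrict Ω), u x = w x :=
    ⟨_, h.1.1.stronglyMeasurable_mk.measurable, h.1.1.ae_eq_mk⟩
  have hw := memW11_congr Ω u w G h hwu
  have hwS : SphereValued Ω w := by
    filter_upwards [hS, hwu] with x h1 h2
    rw [← h2, h1]
  have hgs := gs_integrable Ω hvol G h.2.1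
  have hT : ∫⁻ x in Ω, ENNReal.ofReal (gs (G x)) ≠ ∞ := hgs.lintegral_lt_top.ne
  let ν : Measure R2 := (volume.restrict Ω).withDensity (fun x => ENNReal.ofReal (gs (G x)))
  have hν : ∀ B, MeasurableSet B → B ⊆ Ω → ν B = ∫⁻ x in B, ENNReal.ofReal (gs (G x)) := by
    intro B hB hBΩ
    show (volume.restrict Ω).withDensity (fun x => ENNReal.ofReal (gs (G x))) B = _
    rw [withDensity_apply _ hB, Measure.restrict_restrict hB, inter_eq_left.2 hBΩ]
  have hfin : IsFiniteMeasure ν := isFiniteMeasure_withDensity hT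
  have hm0 := comp_meas w hwm 0
  let S : Bool → Set R2 := fun b => if b then {x | 0 ≤ w x 0} else {x | w x 0 < 0}
  have hP : MeasurableSet {x | 0 ≤ w x 0} := measurableSet_le measurable_const hm0
  have hN : MeasurableSet {x | w x 0 < 0} := measurableSet_lt hm0 measurable_const
  rw [← hν U hU.measurableSet hUΩ]
  refine cover_all Ω U hU hUΩ u ν (ENNReal.ofReal C) ENNReal.ofReal_ne_top S ?_ ?_ ?_ ?_
  · intro b
    cases b
    · exact hN
    · exact hP
  · rw [Set.disjoint_left]
    intro x hx hx2
    exact absurd (show w x 0 < 0 from hx2) (not_lt.2 (show 0 ≤ w x 0 from hx))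
  · ext x
    simp only [mem_univ, iff_true]
    exact le_or_gt 0 (w x 0)
  · intro b n A hA hAn
    have hAΩ : A ⊆ Ω := hAn.trans (inn_subset Ω n)
    have hAu := relaxedArea_le_congr u w A (ae_restrict_of_ae_restrict_of_subset hAΩ hwu)
    refine hAu.trans ?_
    rw [hν A hA.measurableSet hAΩ]
    cases b
    · have h1 := hC Ω hΩ hvol (fun x => - w x) (fun x => - G x) (memW11_neg Ω w G hw)
        (by filter_upwards [hwS] with x hx; rw [norm_neg, hx]) hwm.neg n A hA hAn
      simp only [gs_neg] at h1
      refine ((relaxedArea_neg w A).trans h1).trans ?_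
      have hSf : S false = {x | w x 0 < 0} := by simp [S]
      rw [hSf, hν _ (hA.measurableSet.inter hN.compl) (inter_subset_left.trans hAΩ)]
      gcongr
      intro x hx
      have : -(w x 0) < 0 := hx
      show ¬ (w x 0 < 0)
      linarith
    · have h1 := hC Ω hΩ hvol w G hw hwS hwm n A hA hAn
      refine h1.trans ?_
      have hSf : S true = {x | 0 ≤ w x 0} := by simp [S]
      rw [hSf, hν _ (hA.measurableSet.inter hP.compl) (inter_subset_left.trans hAΩ)]
      gcongr
      intro x hx
      have : w x 0 < 0 := hx
      show ¬ (0 ≤ w x 0)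
      linarith

theorem env_final (Ω : Set R2) (hΩ : IsOpen Ω) (hvol : volume Ω ≠ ∞) (u : R2 → R2) (G : R2 → M2)
    (h : MemW11 Ω u G) (hS : SphereValued Ω u) (U : Set R2) (hU : IsOpen U) (hUΩ : U ⊆ Ω) :
    envA u Ω U = ENNReal.ofReal (∫ x in U, gs (G x)) := by
  have hgs := (gs_integrable Ω hvol G h.2.1).mono_set hUΩ
  rw [ofReal_integral_eq_lintegral_ofReal hgs (Eventually.of_forall fun x => gs_nonneg _)]
  refine le_antisymm (upper_final Ω hΩ hvol u G h hS U hU hUΩ) ?_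
  refine le_sInf ?_
  rintro a ⟨A, hA, hUA, rfl⟩
  calc ∫⁻ x in U, ENNReal.ofReal (gs (G x)) ≤ ∫⁻ x in ⋃ k, A k, ENNReal.ofReal (gs (G x)) :=
        lintegral_mono_set hUA
    _ ≤ ∑' k, ∫⁻ x in A k, ENNReal.ofReal (gs (G x)) := lintegral_iUnion_le _ _
    _ ≤ _ := ENNReal.tsum_le_tsum fun k => lower_bound (A k) (hA k).1
        (ne_top_of_le_ne_top hvol (measure_mono (hA k).2)) u G (memW11_mono Ω (A k) (hA k).2 u G h)


/-- **Proposition (double relaxation).** For `u ∈ W^{1,1}(Ω;S¹)` and every open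
`U ⊆ Ω`, `𝒜**(u,U) = ∫_U √(1+|∇u|²) dx`. -/
theorem envA_eq_integral_on_open (Ω : Set R2) (hΩo : IsOpen Ω)
    (hΩb : Bornology.IsBounded Ω) (hΩc : IsConnected Ω) (hΩl : HasLipschitzBoundary Ω)
    (u : R2 → R2) (G : R2 → Matrix (Fin 2) (Fin 2) ℝ)
    (hu : MemW11 Ω u G) (hS : SphereValued Ω u) :
    ∀ U : Set R2, IsOpen U → U ⊆ Ω →
      envA u Ω U = ENNReal.ofReal (∫ x in U, Real.sqrt (1 + ∑ i, ∑ j, (G x i j) ^ 2)) := by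
  intro U hU hUΩ
  exact env_final Ω hΩo hΩb.measure_lt_top.ne u G hu hS U hU hUΩ
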